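/- arXiv:1011.5833 — 3 statements merged into one kernel-verified Lean document; each statement's English description precedes it below -/
import Mathlib

section
/- Let d ≥ 2 and n = d + 2. For every (α, λ) ∈ ℂ^{d−1} × ℂ and every j ∈ {0,…,n−1} there exists a nonzero solution y of the Schrödinger equation with parameters (α, λ) that is subdominant in the Stokes sector S_j. -/
open Complex Filter Topology

/-- The polynomial potential `P_α(z) = z^d + α_{d-1} z^{d-1} + ⋯ + α₁ z`. -/
noncomputable def Pol (d : ℕ) (α : Fin (d - 1) → ℂ) (z : ℂ) : ℂ :=
  z ^ d + ∑ i : Fin (d - 1), α i * z ^ ((i : ℕ) + 1)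

/-- `y` is an (entire) solution of the Schrödinger equation `y'' = (P_α - λ) y`. -/
def IsSol (d : ℕ) (α : Fin (d - 1) → ℂ) (lam : ℂ) (y : ℂ → ℂ) : Prop :=
  Differentiable ℂ y ∧ ∀ z : ℂ, deriv (deriv y) z = (Pol d α z - lam) * y z

/-- `θ` is a ray direction of the Stokes sector `S_j`. -/
def DirIn (n j : ℕ) (θ : ℝ) : Prop :=
  |θ - 2 * Real.pi * j / n| < Real.pi / n

/-- `y` is subdominant in the Stokes sector `S_j`: it tends to `0` along every ray in `S_j`. -/
def Subdominant (n j : ℕ) (y : ℂ → ℂ) : Prop :=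
  ∀ θ : ℝ, DirIn n j θ →
    Tendsto (fun r : ℝ => y ((r : ℂ) * Complex.exp (θ * Complex.I))) atTop (𝓝 0)

/-- The Taylor coefficients of the solution of `y'' = q y`, `y 0 = A`, `y' 0 = B`, where `q` has
Taylor coefficients `c`. -/
noncomputable def solCoeff (c : ℕ → ℂ) (A B : ℂ) : ℕ → ℂ
  | 0 => A
  | 1 => B
  | k + 2 => (∑ i : Fin (k + 1), c i * solCoeff c A B (k - i)) / ((k + 1) * (k + 2))
decreasing_by omega

lemma solCoeff_add_two (c : ℕ → ℂ) (A B : ℂ) (k : ℕ) :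
    ((k : ℂ) + 1) * (k + 2) * solCoeff c A B (k + 2) =
      ∑ p ∈ Finset.HasAntidiagonal.antidiagonal k, c p.1 * solCoeff c A B p.2 := by
  rw [Finset.Nat.sum_antidiagonal_eq_sum_range_succ (fun i j => c i * solCoeff c A B j),
    Finset.sum_range, solCoeff]
  have h1 : (k : ℂ) + 1 ≠ 0 := by exact_mod_cast k.succ_ne_zero
  have h2 : (k : ℂ) + 2 ≠ 0 := by exact_mod_cast (k + 1).succ_ne_zero
  field_simp

lemma solCoeff_bound (P : Polynomial ℂ) (A B : ℂ) {r : ℝ} (hr : 0 < r) :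
    ∃ M, ∀ k, ‖solCoeff P.coeff A B k‖ * r ^ k ≤ M := by
  set a := solCoeff P.coeff A B
  set S : ℝ := ∑ i ∈ Finset.range (P.natDegree + 1), ‖P.coeff i‖ * r ^ i
  have hS0 : 0 ≤ S := Finset.sum_nonneg fun i _ => by positivity
  have hS : ∀ k, ∑ i ∈ Finset.range (k + 1), ‖P.coeff i‖ * r ^ i ≤ S := by
    intro k
    by_cases h : k ≤ P.natDegree
    · exact Finset.sum_le_sum_of_subset_of_nonneg (Finset.range_mono (by omega))
        fun i _ _ => by positivity
    · refine le_of_eq (Finset.sum_subset (Finset.range_mono (by omega)) fun i _ hi => ?_).symm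
      rw [P.coeff_eq_zero_of_natDegree_lt (by simpa using hi)]
      simp
  obtain ⟨K, hK⟩ := exists_nat_ge (S * r ^ 2)
  set M : ℝ := ∑ i ∈ Finset.range (K + 2), ‖a i‖ * r ^ i
  have hM0 : 0 ≤ M := Finset.sum_nonneg fun i _ => by positivity
  refine ⟨M, fun k => ?_⟩
  induction k using Nat.strong_induction_on with
  | _ k ih =>
    by_cases hk : k < K + 2
    · exact Finset.single_le_sum (f := fun i => ‖a i‖ * r ^ i) (fun i _ => by positivity)
        (Finset.mem_range.2 hk)
    · obtain ⟨m, rfl⟩ : ∃ m, k = m + 2 := ⟨k - 2, by omega⟩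
      have hrec := solCoeff_add_two P.coeff A B m
      have h1 : ((m : ℝ) + 1) * (m + 2) * ‖a (m + 2)‖ ≤
          ∑ p ∈ Finset.HasAntidiagonal.antidiagonal m, ‖P.coeff p.1‖ * ‖a p.2‖ := by
        have := norm_sum_le (Finset.HasAntidiagonal.antidiagonal m) fun p => P.coeff p.1 * a p.2
        rw [← hrec] at this
        simp only [norm_mul] at this
        have e1 : ‖(m : ℂ) + 1‖ = m + 1 := by exact_mod_cast Complex.norm_natCast (m + 1)
        have e2 : ‖(m : ℂ) + 2‖ = m + 2 := by exact_mod_cast Complex.norm_natCast (m + 2)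
        rwa [e1, e2] at this
      have h2 : (∑ p ∈ Finset.HasAntidiagonal.antidiagonal m, ‖P.coeff p.1‖ * ‖a p.2‖) * r ^ m ≤
          S * M := by
        calc _ = ∑ p ∈ Finset.HasAntidiagonal.antidiagonal m,
                (‖P.coeff p.1‖ * r ^ p.1) * (‖a p.2‖ * r ^ p.2) := by
              rw [Finset.sum_mul]
              refine Finset.sum_congr rfl fun p hp => ?_
              rw [← Finset.HasAntidiagonal.mem_antidiagonal.1 hp, pow_add]; ring
          _ ≤ ∑ p ∈ Finset.HasAntidiagonal.antidiagonal m, (‖P.coeff p.1‖ * r ^ p.1) * M := by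
              refine Finset.sum_le_sum fun p hp => ?_
              have := Finset.HasAntidiagonal.mem_antidiagonal.1 hp
              exact mul_le_mul_of_nonneg_left (ih _ (by omega)) (by positivity)
          _ = (∑ i ∈ Finset.range (m + 1), ‖P.coeff i‖ * r ^ i) * M := by
              rw [← Finset.sum_mul, Finset.Nat.sum_antidiagonal_eq_sum_range_succ
                (fun i _ => ‖P.coeff i‖ * r ^ i)]
          _ ≤ S * M := mul_le_mul_of_nonneg_right (hS m) hM0
      have hmK : S * r ^ 2 ≤ ((m : ℝ) + 1) * (m + 2) := by
        have : (K : ℝ) ≤ m := by exact_mod_cast (by omega : K ≤ m)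
        nlinarith
      have h3 : ((m : ℝ) + 1) * (m + 2) * (‖a (m + 2)‖ * r ^ (m + 2)) ≤
          ((m : ℝ) + 1) * (m + 2) * M := by
        calc _ = (((m : ℝ) + 1) * (m + 2) * ‖a (m + 2)‖) * r ^ m * r ^ 2 := by ring
          _ ≤ (S * M) * r ^ 2 := 
              mul_le_mul_of_nonneg_right
                ((mul_le_mul_of_nonneg_right h1 (by positivity)).trans h2) (by positivity)
          _ = (S * r ^ 2) * M := by ring
          _ ≤ _ := by gcongr
      exact le_of_mul_le_mul_left h3 (by positivity)

section PowerSeries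

variable {a : ℕ → ℂ}

lemma summable_norm_powerSeries (ha : ∀ r : ℝ, 0 < r → ∃ M, ∀ k, ‖a k‖ * r ^ k ≤ M) (z : ℂ) :
    Summable fun k => ‖a k * z ^ k‖ := by
  obtain ⟨M, hM⟩ := ha (2 * (‖z‖ + 1)) (by positivity)
  refine Summable.of_nonneg_of_le (fun _ => norm_nonneg _) (fun k => ?_)
    ((summable_geometric_two).mul_left M)
  have h := hM k
  have hz : ‖z‖ ^ k ≤ (‖z‖ + 1) ^ k := by gcongr; linarith
  calc ‖a k * z ^ k‖ = ‖a k‖ * ‖z‖ ^ k := by simp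
    _ ≤ ‖a k‖ * (‖z‖ + 1) ^ k := by gcongr
    _ = (‖a k‖ * (2 * (‖z‖ + 1)) ^ k) * (1 / 2) ^ k := by
        rw [mul_pow, one_div, inv_pow]; field_simp
    _ ≤ _ := by gcongr

lemma deriv_coeff_bound (ha : ∀ r : ℝ, 0 < r → ∃ M, ∀ k, ‖a k‖ * r ^ k ≤ M)
    (r : ℝ) (hr : 0 < r) :
    ∃ M, ∀ k : ℕ, ‖((k : ℂ) + 1) * a (k + 1)‖ * r ^ k ≤ M := by
  obtain ⟨M, hM⟩ := ha (2 * r) (by positivity)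
  refine ⟨M / r, fun k => ?_⟩
  have h := hM (k + 1)
  have e1 : ‖(k : ℂ) + 1‖ = k + 1 := by exact_mod_cast Complex.norm_natCast (k + 1)
  have h2 : (k : ℝ) + 1 ≤ 2 ^ (k + 1) := by exact_mod_cast (Nat.lt_two_pow_self (n := k + 1)).le
  rw [le_div_iff₀ hr, norm_mul, e1]
  calc _ = ((k : ℝ) + 1) * (‖a (k + 1)‖ * r ^ (k + 1)) := by ring
    _ ≤ 2 ^ (k + 1) * (‖a (k + 1)‖ * r ^ (k + 1)) := by gcongr
    _ = ‖a (k + 1)‖ * (2 * r) ^ (k + 1) := by rw [mul_pow]; ring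
    _ ≤ M := h

lemma hasDerivAt_powerSeries (ha : ∀ r : ℝ, 0 < r → ∃ M, ∀ k, ‖a k‖ * r ^ k ≤ M) (z : ℂ) :
    HasDerivAt (fun z => ∑' k, a k * z ^ k) (∑' k : ℕ, ((k : ℂ) + 1) * a (k + 1) * z ^ k) z := by
  set ρ : ℝ := ‖z‖ + 1 with hρ
  have hs' := summable_norm_powerSeries (deriv_coeff_bound ha) (ρ : ℂ)
  have hu : Summable fun k : ℕ => ‖(k : ℂ) * a k * (ρ : ℂ) ^ (k - 1)‖ := by
    rw [← summable_nat_add_iff 1]; simpa using hs'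
  have hsum : ∀ w : ℂ, ‖w‖ < ρ → ∀ k : ℕ,
      ‖(k : ℂ) * a k * w ^ (k - 1)‖ ≤ ‖(k : ℂ) * a k * (ρ : ℂ) ^ (k - 1)‖ := by
    intro w hw k
    have h0 : 0 ≤ ρ := by positivity
    simp only [norm_mul, norm_pow, Complex.norm_real, Real.norm_of_nonneg h0]
    gcongr
  have h := hasDerivAt_tsum_of_isPreconnected (g := fun k z => a k * z ^ k)
    (g' := fun k z => (k : ℂ) * a k * z ^ (k - 1)) (y₀ := 0) (y := z) hu
    (Metric.isOpen_ball (x := (0 : ℂ)) (ε := ρ)) (convex_ball _ _).isPreconnected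
    (fun k w _ => by
      exact ((hasDerivAt_pow k w).const_mul (a k)).congr_deriv (by ring))
    (fun k w hw => hsum w (by simpa using hw) k)
    (by simpa using (by positivity : 0 < ρ)) (summable_norm_powerSeries ha 0).of_norm
    (by simp [hρ])
  refine h.congr_deriv ?_
  rw [(Summable.of_norm_bounded hu (hsum z (by linarith))).tsum_eq_zero_add]
  simp

end PowerSeries

/-- `y` is an entire solution of `y'' = q y`. -/
def IsEntireSol (q y : ℂ → ℂ) : Prop :=
  Differentiable ℂ y ∧ ∀ z : ℂ, deriv (deriv y) z = q z * y z

lemma exists_isEntireSol (P : Polynomial ℂ) (A B : ℂ) :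
    ∃ y, IsEntireSol (fun z => P.eval z) y ∧ y 0 = A ∧ deriv y 0 = B := by
  set a := solCoeff P.coeff A B with hadef
  have ha : ∀ r : ℝ, 0 < r → ∃ M, ∀ k, ‖a k‖ * r ^ k ≤ M := fun r hr => solCoeff_bound P A B hr
  have hd1 := fun z => hasDerivAt_powerSeries ha z
  have hd2 := fun z => hasDerivAt_powerSeries (deriv_coeff_bound ha) z
  have e1 := deriv_eq hd1
  refine ⟨fun z => ∑' k, a k * z ^ k, ⟨fun z => (hd1 z).differentiableAt, fun z => ?_⟩, ?_, ?_⟩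
  · rw [e1, (hd2 z).deriv]
    beta_reduce
    have hP : ∀ r : ℝ, 0 < r → ∃ M, ∀ k, ‖P.coeff k‖ * r ^ k ≤ M := by
      intro r hr
      refine ⟨∑ i ∈ P.support, ‖P.coeff i‖ * r ^ i, fun k => ?_⟩
      by_cases hk : k ∈ P.support
      · exact Finset.single_le_sum (f := fun i => ‖P.coeff i‖ * r ^ i)
          (fun i _ => by positivity) hk
      · rw [Polynomial.notMem_support_iff.1 hk, norm_zero, zero_mul]
        exact Finset.sum_nonneg fun i _ => by positivity
    have hPz : P.eval z = ∑' k, P.coeff k * z ^ k := by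
      rw [Polynomial.eval_eq_sum, Polynomial.sum]
      refine (tsum_eq_sum fun k hk => ?_).symm
      rw [Polynomial.notMem_support_iff.1 hk, zero_mul]
    rw [hPz, tsum_mul_tsum_eq_tsum_sum_antidiagonal_of_summable_norm
      (summable_norm_powerSeries hP z) (summable_norm_powerSeries ha z)]
    refine tsum_congr fun k => ?_
    have := solCoeff_add_two P.coeff A B k
    rw [← hadef] at this
    calc _ = (((k : ℂ) + 1) * (k + 2) * a (k + 2)) * z ^ k := by push_cast; ring
      _ = _ := by
        rw [this, Finset.sum_mul]
        refine Finset.sum_congr rfl fun p hp => ?_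
        rw [← Finset.HasAntidiagonal.mem_antidiagonal.1 hp, pow_add]; ring
  · simp only
    rw [tsum_eq_single 0 fun k hk => by simp [hk]]
    simp [hadef, solCoeff]
  · rw [e1]; simp only
    rw [tsum_eq_single 0 fun k hk => by simp [hk]]
    simp [hadef, solCoeff]

lemma IsEntireSol.hasDerivAt {q y : ℂ → ℂ} (hy : IsEntireSol q y) (z : ℂ) :
    HasDerivAt y (deriv y z) z := (hy.1 z).hasDerivAt

lemma IsEntireSol.hasDerivAt_deriv {q y : ℂ → ℂ} (hy : IsEntireSol q y) (z : ℂ) :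
    HasDerivAt (deriv y) (q z * y z) z := by
  rw [← hy.2 z]
  exact (hy.1.contDiff.differentiable_deriv_two z).hasDerivAt

lemma IsEntireSol.of_hasDerivAt {q y y' : ℂ → ℂ} (h : ∀ z, HasDerivAt y (y' z) z)
    (h' : ∀ z, HasDerivAt y' (q z * y z) z) : IsEntireSol q y :=
  ⟨fun z => (h z).differentiableAt, fun z => by rw [deriv_eq h, (h' z).deriv]⟩

lemma IsEntireSol.sub_const_mul {q u v : ℂ → ℂ} (hu : IsEntireSol q u) (hv : IsEntireSol q v)
    (L : ℂ) : IsEntireSol q (fun z => v z - L * u z) :=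
  .of_hasDerivAt (fun z => (hv.hasDerivAt z).sub ((hu.hasDerivAt z).const_mul L)) fun z =>
    ((hv.hasDerivAt_deriv z).sub ((hu.hasDerivAt_deriv z).const_mul L)).congr_deriv (by ring)

lemma IsEntireSol.deriv_sub_const_mul {q u v : ℂ → ℂ} (hu : IsEntireSol q u)
    (hv : IsEntireSol q v) (L z : ℂ) :
    deriv (fun z => v z - L * u z) z = deriv v z - L * deriv u z :=
  ((hv.hasDerivAt z).sub ((hu.hasDerivAt z).const_mul L)).deriv

/-- The Wronskian of two solutions is constant. -/
lemma IsEntireSol.wronskian_eq {q u v : ℂ → ℂ} (hu : IsEntireSol q u) (hv : IsEntireSol q v)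
    (z w : ℂ) : u z * deriv v z - deriv u z * v z = u w * deriv v w - deriv u w * v w := by
  have h : ∀ z, HasDerivAt (fun z => u z * deriv v z - deriv u z * v z) 0 z := fun z =>
    (((hu.hasDerivAt z).mul (hv.hasDerivAt_deriv z)).sub
      ((hu.hasDerivAt_deriv z).mul (hv.hasDerivAt z))).congr_deriv (by ring)
  exact is_const_of_deriv_eq_zero (fun z => (h z).differentiableAt) (fun z => (h z).deriv) z w

section RayEnergy

open ComplexConjugate

/-- The energy `Re (b \bar y y')` along the ray with direction `e`. -/
noncomputable def rayEnergy (b e : ℂ) (y : ℂ → ℂ) (t : ℝ) : ℝ :=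
  (b * conj (y (t * e)) * deriv y (t * e)).re

lemma hasDerivAt_ray {f : ℂ → ℂ} {f' : ℂ} {e : ℂ} {t : ℝ} (h : HasDerivAt f f' (t * e)) :
    HasDerivAt (fun t : ℝ => f (t * e)) (e * f') t := by
  have h1 : HasDerivAt (fun t : ℝ => (t : ℂ) * e) e t := by
    simpa using (Complex.ofRealCLM.hasDerivAt (x := t)).mul_const e
  exact (h.comp t h1).congr_deriv (by ring)

lemma hasDerivAt_re {f : ℝ → ℂ} {f' : ℂ} {t : ℝ} (h : HasDerivAt f f' t) :
    HasDerivAt (fun t => (f t).re) f'.re t :=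
  Complex.reCLM.hasFDerivAt.comp_hasDerivAt t h

lemma hasDerivAt_conj {f : ℝ → ℂ} {f' : ℂ} {t : ℝ} (h : HasDerivAt f f' t) :
    HasDerivAt (fun t => conj (f t)) (conj f') t :=
  (Complex.conjCLE : ℂ →L[ℝ] ℂ).hasFDerivAt.comp_hasDerivAt t h

variable {q y : ℂ → ℂ} {b e : ℂ} {c t : ℝ}

lemma hasDerivAt_rayEnergy (hy : IsEntireSol q y) (b e : ℂ) (t : ℝ) :
    HasDerivAt (rayEnergy b e y) ((b * conj e).re * ‖deriv y (t * e)‖ ^ 2 +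
      (b * e * q (t * e)).re * ‖y (t * e)‖ ^ 2) t := by
  have h1 := hasDerivAt_ray (hy.hasDerivAt (t * e))
  have h2 := hasDerivAt_ray (hy.hasDerivAt_deriv (t * e))
  refine (hasDerivAt_re (((hasDerivAt_conj h1).const_mul b).mul h2)).congr_deriv ?_
  rw [← Complex.normSq_eq_norm_sq, ← Complex.normSq_eq_norm_sq, ← Complex.re_mul_ofReal,
    ← Complex.re_mul_ofReal, ← Complex.add_re, Complex.normSq_eq_conj_mul_self,
    Complex.normSq_eq_conj_mul_self, map_mul]
  congr 1
  ring

lemma hasDerivAt_norm_sq_ray (hy : IsEntireSol q y) (e : ℂ) (t : ℝ) :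
    HasDerivAt (fun t : ℝ => ‖y (t * e)‖ ^ 2)
      (2 * (conj (y (t * e)) * (e * deriv y (t * e))).re) t := by
  have h1 := hasDerivAt_ray (hy.hasDerivAt (t * e))
  have h := hasDerivAt_re ((hasDerivAt_conj h1).mul h1)
  have e1 : ∀ z : ℂ, (conj z * z).re = ‖z‖ ^ 2 := fun z => by
    rw [← Complex.normSq_eq_conj_mul_self, Complex.ofReal_re, Complex.normSq_eq_norm_sq]
  refine (h.congr_of_eventuallyEq (.of_forall fun t => (e1 _).symm)).congr_deriv ?_
  simp only [map_mul, Complex.add_re, Complex.mul_re, Complex.mul_im, Complex.conj_re,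
    Complex.conj_im]
  ring

lemma abs_rayEnergy_le (hb : ‖b‖ = 1) :
    |rayEnergy b e y t| ≤ ‖y (t * e)‖ * ‖deriv y (t * e)‖ := by
  refine (Complex.abs_re_le_norm _).trans_eq ?_
  rw [norm_mul, norm_mul, hb, RCLike.norm_conj, one_mul]

/-- Coercivity of the energy along a ray on the half-line `[T, ∞)`. -/
structure RayCoercive (q : ℂ → ℂ) (b e : ℂ) (c T : ℝ) : Prop where
  pos : 0 < c
  norm_left : ‖b‖ = 1
  norm_right : ‖e‖ = 1
  le_re_left : c ≤ b.re
  le_re_conj : c ≤ (b * conj e).re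
  le_re_mul : ∀ t, T ≤ t → c ≤ (b * e * q (t * e)).re

variable {T : ℝ}

lemma RayCoercive.le_deriv (H : RayCoercive q b e c T) (hy : IsEntireSol q y)
    (ht : T ≤ t) :
    c * (‖deriv y (t * e)‖ ^ 2 + ‖y (t * e)‖ ^ 2) ≤ deriv (rayEnergy b e y) t := by
  rw [(hasDerivAt_rayEnergy hy b e t).deriv, mul_add]
  gcongr
  · exact H.le_re_conj
  · exact H.le_re_mul t ht

lemma RayCoercive.two_mul_abs_le_deriv (H : RayCoercive q b e c T) (hy : IsEntireSol q y)
    (ht : T ≤ t) :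
    2 * c * |rayEnergy b e y t| ≤ deriv (rayEnergy b e y) t := by
  refine le_trans ?_ (H.le_deriv hy ht)
  have := abs_rayEnergy_le (e := e) (y := y) (t := t) H.norm_left
  nlinarith [sq_nonneg (‖y (t * e)‖ - ‖deriv y (t * e)‖), H.pos]

lemma monotoneOn_rayEnergy_add (hy : IsEntireSol q y) {g g' : ℝ → ℝ} (hg : ∀ t, HasDerivAt g (g' t) t)
    (h : ∀ t, T ≤ t → 0 ≤ deriv (rayEnergy b e y) t + g' t) :
    MonotoneOn (fun t => rayEnergy b e y t + g t) (Set.Ici T) := by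
  have hd : ∀ t, HasDerivAt (fun t => rayEnergy b e y t + g t)
      (deriv (rayEnergy b e y) t + g' t) t := fun t =>
    (hasDerivAt_rayEnergy hy b e t).differentiableAt.hasDerivAt.add (hg t)
  refine monotoneOn_of_deriv_nonneg (convex_Ici T)
    (fun t _ => (hd t).continuousAt.continuousWithinAt)
    (fun t _ => (hd t).differentiableAt.differentiableWithinAt) fun t ht => ?_
  rw [(hd t).deriv]
  exact h t (interior_subset ht)

lemma RayCoercive.monotoneOn (H : RayCoercive q b e c T) (hy : IsEntireSol q y) :
    MonotoneOn (rayEnergy b e y) (Set.Ici T) := by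
  simpa using monotoneOn_rayEnergy_add (b := b) (e := e) (T := T) hy
    (fun t => hasDerivAt_const t 0) fun t ht => by
    rw [add_zero]
    exact (mul_nonneg (by linarith [H.pos]) (abs_nonneg _)).trans (H.two_mul_abs_le_deriv hy ht)

lemma RayCoercive.monotoneOn_mul_exp (H : RayCoercive q b e c T) (hy : IsEntireSol q y)
    {κ : ℝ} (hκ : |κ| ≤ 2 * c) :
    MonotoneOn (fun t => rayEnergy b e y t * Real.exp (κ * t)) (Set.Ici T) := by
  have hd : ∀ t, HasDerivAt (fun t => rayEnergy b e y t * Real.exp (κ * t))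
      ((deriv (rayEnergy b e y) t + κ * rayEnergy b e y t) * Real.exp (κ * t)) t := fun t => by
    have h1 : HasDerivAt (fun t : ℝ => Real.exp (κ * t)) (Real.exp (κ * t) * (κ * 1)) t :=
      ((hasDerivAt_id t).const_mul κ).exp
    refine ((hasDerivAt_rayEnergy hy b e t).differentiableAt.hasDerivAt.mul h1).congr_deriv ?_
    ring
  refine monotoneOn_of_deriv_nonneg (convex_Ici T)
    (fun t _ => (hd t).continuousAt.continuousWithinAt)
    (fun t _ => (hd t).differentiableAt.differentiableWithinAt) fun t ht => ?_
  rw [(hd t).deriv]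
  refine mul_nonneg ?_ (Real.exp_pos _).le
  have h1 := H.two_mul_abs_le_deriv hy (interior_subset ht : t ∈ Set.Ici T)
  have h2 : |κ * rayEnergy b e y t| ≤ 2 * c * |rayEnergy b e y t| := by
    rw [abs_mul]; gcongr
  linarith [neg_abs_le (κ * rayEnergy b e y t)]

/-- A solution of nonpositive energy decays exponentially. -/
lemma RayCoercive.norm_sq_le (H : RayCoercive q b e c T) (hy : IsEntireSol q y)
    (hE : ∀ t, T ≤ t → rayEnergy b e y t ≤ 0) (ht : T ≤ t) :
    c * ‖y (t * e)‖ ^ 2 ≤ -rayEnergy b e y t := by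
  have hmono : MonotoneOn (fun t => rayEnergy b e y t + c * ‖y (t * e)‖ ^ 2) (Set.Ici T) := by
    refine monotoneOn_rayEnergy_add hy (fun t => (hasDerivAt_norm_sq_ray hy e t).const_mul c)
      fun t ht => ?_
    have h1 := H.le_deriv hy ht
    have h2 := Complex.abs_re_le_norm (conj (y (t * e)) * (e * deriv y (t * e)))
    rw [norm_mul, norm_mul, H.norm_right, RCLike.norm_conj, one_mul] at h2
    nlinarith [neg_le_of_abs_le h2, sq_nonneg (‖y (t * e)‖ - ‖deriv y (t * e)‖), H.pos]
  by_contra! hlt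
  set δ : ℝ := rayEnergy b e y t + c * ‖y (t * e)‖ ^ 2 with hδ
  have hδ0 : 0 < δ := by linarith
  have hgrow : MonotoneOn (fun s => rayEnergy b e y s + -(δ * s)) (Set.Ici t) := by
    refine monotoneOn_rayEnergy_add (g' := fun _ => -δ) hy
      (fun s => (((hasDerivAt_id s).const_mul δ).neg).congr_deriv (by simp)) fun s hs => ?_
    have h1 := H.le_deriv hy (ht.trans hs)
    have h2 : δ ≤ rayEnergy b e y s + c * ‖y (s * e)‖ ^ 2 := hmono ht (ht.trans hs) hs
    nlinarith [hE s (ht.trans hs), H.pos, sq_nonneg ‖deriv y (s * e)‖,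
      mul_nonneg H.pos.le (sq_nonneg ‖deriv y (s * e)‖)]
  set s : ℝ := t + (1 - rayEnergy b e y t) / δ with hs
  have hts : t ≤ s := by
    have : 0 ≤ (1 - rayEnergy b e y t) / δ := div_nonneg (by linarith [hE t ht]) hδ0.le
    linarith
  have h1 : rayEnergy b e y t + -(δ * t) ≤ rayEnergy b e y s + -(δ * s) :=
    hgrow Set.self_mem_Ici hts hts
  have h2 : δ * s = δ * t + (1 - rayEnergy b e y t) := by
    rw [hs]; field_simp
  linarith [hE s (ht.trans hts)]

end RayEnergy

section Robin

open ComplexConjugate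

lemma mul_norm_sq_add_le {b p s : ℂ} {c : ℝ} (hb : ‖b‖ = 1) (hc : c ≤ b.re) :
    c * ‖p‖ ^ 2 + (b * conj p * s).re ≤ ‖p‖ * ‖s + p‖ := by
  have h1 : (b * conj p * (s + p)).re = b.re * ‖p‖ ^ 2 + (b * conj p * s).re := by
    rw [← Complex.normSq_eq_norm_sq, ← Complex.re_mul_ofReal, Complex.normSq_eq_conj_mul_self,
      ← Complex.add_re]
    congr 1; ring
  have h2 := Complex.re_le_norm (b * conj p * (s + p))
  rw [norm_mul, norm_mul, hb, RCLike.norm_conj, one_mul, h1] at h2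
  nlinarith [sq_nonneg ‖p‖]

/-- A lower bound for `|y' + y|` in terms of the energy. -/
lemma mul_re_le_norm_add_sq {b p s : ℂ} {c : ℝ} (hb : ‖b‖ = 1) (hc0 : 0 < c) (hc : c ≤ b.re)
    (h : 0 ≤ (b * conj p * s).re) : c * (b * conj p * s).re ≤ ‖s + p‖ ^ 2 := by
  have h1 := mul_norm_sq_add_le (p := p) (s := s) hb hc
  rcases (norm_nonneg p).eq_or_lt with h0 | h0
  · rw [← h0] at h1
    nlinarith [sq_nonneg ‖s + p‖]
  · have h2 : c * ‖p‖ ≤ ‖s + p‖ := by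
      refine le_of_mul_le_mul_left ?_ h0
      nlinarith
    nlinarith [norm_nonneg (s + p), mul_nonneg hc0.le (sq_nonneg ‖p‖)]

/-- The coefficient `(v' + v) / (u' + u)` for which `v - L u` satisfies the Robin condition
`y' + y = 0` at `z`. -/
noncomputable def robinQuot (u v : ℂ → ℂ) (z : ℂ) : ℂ := (deriv v z + v z) / (deriv u z + u z)

lemma hasDerivAt_robinQuot {q u v : ℂ → ℂ} (hu : IsEntireSol q u) (hv : IsEntireSol q v) {z : ℂ}
    (hz : deriv u z + u z ≠ 0) :
    HasDerivAt (robinQuot u v)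
      ((1 - q z) * (u z * deriv v z - deriv u z * v z) / (deriv u z + u z) ^ 2) z :=
  (((hv.hasDerivAt_deriv z).add (hv.hasDerivAt z)).div
    ((hu.hasDerivAt_deriv z).add (hu.hasDerivAt z)) hz).congr_deriv
    (by congr 1; simp only [Pi.add_apply]; ring)

variable {q u v : ℂ → ℂ} {b e : ℂ} {c t : ℝ}

/-- The energy of `v - L u` is nonpositive where the Robin condition holds, hence before. -/
lemma RayCoercive.rayEnergy_robin_nonpos (H : RayCoercive q b e c 0) (hu : IsEntireSol q u)
    (hv : IsEntireSol q v) {s : ℝ} (hs : 0 ≤ s) (hst : s ≤ t)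
    (hz : deriv u (t * e) + u (t * e) ≠ 0) :
    rayEnergy b e (fun z => v z - robinQuot u v (t * e) * u z) s ≤ 0 := by
  refine (H.monotoneOn (hu.sub_const_mul hv _) hs (hs.trans hst) hst).trans ?_
  set L := robinQuot u v (t * e) with hL
  have h0 : deriv v (t * e) - L * deriv u (t * e) = -(v (t * e) - L * u (t * e)) := by
    rw [hL, robinQuot]; field_simp; ring
  rw [rayEnergy, hu.deriv_sub_const_mul hv, h0, mul_neg, mul_assoc,
    ← Complex.normSq_eq_conj_mul_self, Complex.neg_re, Complex.re_mul_ofReal]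
  have := mul_nonneg (H.pos.le.trans H.le_re_left) (Complex.normSq_nonneg (v (t * e) - L * u (t * e)))
  linarith

/-- The solution with `u = u' = 1` at the origin grows exponentially along coercive rays. -/
lemma RayCoercive.exp_le_norm_robin (H : RayCoercive q b e c 0) (hu : IsEntireSol q u)
    (hu0 : u 0 = 1) (hu1 : deriv u 0 = 1) (ht : 0 ≤ t) :
    c ^ 2 * Real.exp (2 * c * t) ≤ ‖deriv u (t * e) + u (t * e)‖ ^ 2 := by
  have h := H.monotoneOn_mul_exp hu (κ := -(2 * c))
    (by rw [abs_neg, abs_of_pos (by linarith [H.pos])]) Set.self_mem_Ici ht ht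
  have h0 : c ≤ rayEnergy b e u 0 := by
    simpa [rayEnergy, hu0, hu1] using H.le_re_left
  have h1 : c * Real.exp (2 * c * t) ≤ rayEnergy b e u t := by
    have h2 : c ≤ rayEnergy b e u t * Real.exp (-(2 * c) * t) := by
      simpa using h0.trans (by simpa using h)
    rwa [neg_mul, Real.exp_neg, ← div_eq_mul_inv, le_div_iff₀ (Real.exp_pos _)] at h2
  have h2 := mul_re_le_norm_add_sq (p := u (t * e)) (s := deriv u (t * e)) H.norm_left H.pos
    H.le_re_left ((mul_nonneg H.pos.le (Real.exp_pos _).le).trans h1)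
  refine le_trans ?_ h2
  have := mul_le_mul_of_nonneg_left h1 H.pos.le
  rw [rayEnergy] at this
  linarith

end Robin

/-- Coercivity of the energy along all rays in the sector `|θ| ≤ Θ`, for the weights
`exp (-i k θ)`. -/
structure SectorCoercive (q : ℂ → ℂ) (k Θ c : ℝ) : Prop where
  nonneg : 0 ≤ Θ
  ray : ∀ θ : ℝ, |θ| ≤ Θ → RayCoercive q (exp (-(k * θ) * I)) (exp (θ * I)) c 0
  growth : ∃ C m, ∀ z, ‖q z‖ ≤ C * (1 + ‖z‖) ^ (m : ℕ)

lemma tendsto_pow_mul_exp_neg (C : ℝ) (m : ℕ) {c : ℝ} (hc : 0 < c) :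
    Tendsto (fun t : ℝ => C * (1 + t) ^ m / Real.exp (2 * c * t)) atTop (𝓝 0) := by
  have h1 : Tendsto (fun t : ℝ => 2 * c * (1 + t)) atTop atTop :=
    (tendsto_atTop_add_const_left _ 1 tendsto_id).const_mul_atTop (by positivity)
  have h := ((Real.tendsto_pow_mul_exp_neg_atTop_nhds_zero m).comp h1).const_mul
    (C / (2 * c) ^ m * Real.exp (2 * c))
  rw [mul_zero] at h
  refine h.congr fun t => ?_
  simp only [Function.comp]
  rw [mul_add, mul_one, neg_add, Real.exp_add, Real.exp_neg, Real.exp_neg,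
    show 2 * c + 2 * c * t = 2 * c * (1 + t) by ring, mul_pow (2 * c) (1 + t)]
  field_simp

/-- The Robin quotient has the same behaviour along all rays of a coercive sector. -/
lemma SectorCoercive.tendsto_robinQuot_sub {q u v : ℂ → ℂ} {k Θ c : ℝ}
    (H : SectorCoercive q k Θ c) (hu : IsEntireSol q u) (hv : IsEntireSol q v) (hu0 : u 0 = 1)
    (hu1 : deriv u 0 = 1) (hv0 : v 0 = 0) (hv1 : deriv v 0 = 1) {θ : ℝ} (hθ : |θ| ≤ Θ) :
    Tendsto (fun t : ℝ => robinQuot u v (t * exp (θ * I)) - robinQuot u v t) atTop (𝓝 0) := by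
  obtain ⟨C, m, hC⟩ := H.growth
  have hc := (H.ray 0 (by simpa using H.nonneg)).pos
  have hC0 : 0 ≤ C := by simpa using (norm_nonneg _).trans (hC 0)
  have hlim := (tendsto_pow_mul_exp_neg ((1 + C) / c ^ 2) (m + 1) hc).mul_const |θ|
  rw [zero_mul] at hlim
  refine squeeze_zero_norm' ?_ hlim
  filter_upwards [eventually_ge_atTop 0] with t ht
  have hbound : ∀ φ ∈ Set.Icc (-Θ) Θ, HasDerivWithinAt
      (fun φ : ℝ => robinQuot u v (t * exp (φ * I)))
      ((1 - q (t * exp (φ * I))) / (deriv u (t * exp (φ * I)) + u (t * exp (φ * I))) ^ 2 *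
        (t * (exp (φ * I) * I))) (Set.Icc (-Θ) Θ) φ ∧
      ‖(1 - q (t * exp (φ * I))) / (deriv u (t * exp (φ * I)) + u (t * exp (φ * I))) ^ 2 *
        (t * (exp (φ * I) * I))‖ ≤ (1 + C) / c ^ 2 * (1 + t) ^ (m + 1) / Real.exp (2 * c * t) := by
    intro φ hφ
    have hlow := (H.ray φ (abs_le.2 hφ)).exp_le_norm_robin hu hu0 hu1 ht
    have hpos : 0 < c ^ 2 * Real.exp (2 * c * t) := by positivity
    have hne : deriv u (t * exp (φ * I)) + u (t * exp (φ * I)) ≠ 0 := by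
      intro h0
      rw [h0, norm_zero] at hlow
      norm_num at hlow
      linarith
    constructor
    · have h1 : HasDerivAt (fun φ : ℝ => (t : ℂ) * exp (φ * I)) (t * (exp (φ * I) * I)) φ := by
        have : HasDerivAt (fun φ : ℝ => (φ : ℂ) * I) I φ := by
          simpa using (Complex.ofRealCLM.hasDerivAt (x := φ)).mul_const I
        exact this.cexp.const_mul (t : ℂ)
      have h2 := hasDerivAt_robinQuot hu hv hne
      rw [hu.wronskian_eq hv _ 0, hu0, hu1, hv0, hv1] at h2
      have h3 := (h2.comp φ h1).hasDerivWithinAt (s := Set.Icc (-Θ) Θ)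
      refine h3.congr_deriv ?_
      ring
    · have hn : ‖(t : ℂ) * exp (φ * I)‖ = t := by
        rw [norm_mul, Complex.norm_exp_ofReal_mul_I, Complex.norm_real, Real.norm_of_nonneg ht,
          mul_one]
      have hq : ‖1 - q (t * exp (φ * I))‖ ≤ (1 + C) * (1 + t) ^ m := by
        have h1 := norm_sub_le (1 : ℂ) (q (t * exp (φ * I)))
        have h2 := hC (t * exp (φ * I))
        rw [hn] at h2
        rw [norm_one] at h1
        have h3 : (1 : ℝ) ≤ (1 + t) ^ m := one_le_pow₀ (by linarith)
        linarith
      rw [← mul_assoc (t : ℂ), norm_mul, norm_div, norm_pow, norm_mul _ I, hn, Complex.norm_I,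
        mul_one]
      calc _ ≤ (1 + C) * (1 + t) ^ m / (c ^ 2 * Real.exp (2 * c * t)) * (1 + t) := by
            gcongr
            linarith
        _ = _ := by field_simp; ring
  have hmem : ∀ φ : ℝ, |φ| ≤ Θ → φ ∈ Set.Icc (-Θ) Θ := fun φ h => abs_le.1 h
  have := (convex_Icc (-Θ) Θ).norm_image_sub_le_of_norm_hasDerivWithin_le
    (fun φ hφ => (hbound φ hφ).1) (fun φ hφ => (hbound φ hφ).2)
    (hmem 0 (by simpa using H.nonneg)) (hmem θ hθ)
  simpa using this

/-- A coercive sector carries a nonzero solution of nonpositive energy along all its rays. -/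
lemma SectorCoercive.exists_rayEnergy_nonpos {P : Polynomial ℂ} {k Θ c : ℝ}
    (H : SectorCoercive (fun z => P.eval z) k Θ c) :
    ∃ y, IsEntireSol (fun z => P.eval z) y ∧ y ≠ 0 ∧ ∀ θ : ℝ, |θ| ≤ Θ → ∀ t : ℝ, 0 ≤ t →
      rayEnergy (exp (-(k * θ) * I)) (exp (θ * I)) y t ≤ 0 := by
  obtain ⟨u, hu, hu0, hu1⟩ := exists_isEntireSol P 1 1
  obtain ⟨v, hv, hv0, hv1⟩ := exists_isEntireSol P 0 1
  have hne : ∀ θ : ℝ, |θ| ≤ Θ → ∀ t : ℝ, 0 ≤ t →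
      deriv u (t * exp (θ * I)) + u (t * exp (θ * I)) ≠ 0 := by
    intro θ hθ t ht h0
    have hlow := (H.ray θ hθ).exp_le_norm_robin hu hu0 hu1 ht
    have : 0 < c ^ 2 * Real.exp (2 * c * t) := mul_pos (pow_pos (H.ray θ hθ).pos 2) (Real.exp_pos _)
    rw [h0, norm_zero] at hlow
    norm_num at hlow
    linarith
  have h00 : |(0 : ℝ)| ≤ Θ := by simpa using H.nonneg
  have hmem : ∀ n : ℕ, robinQuot u v (n : ℝ) ∈ Metric.closedBall (0 : ℂ) 1 := by
    intro n
    have h := (H.ray 0 h00).rayEnergy_robin_nonpos hu hv le_rfl n.cast_nonneg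
      (hne 0 h00 n n.cast_nonneg)
    simp only [rayEnergy, hu.deriv_sub_const_mul hv] at h
    simp only [ofReal_zero, mul_zero, neg_zero, zero_mul, exp_zero, mul_one, hu0, hu1, hv0, hv1,
      zero_sub, one_mul] at h
    set L := robinQuot u v (n : ℝ)
    have h1 : ‖L‖ ^ 2 ≤ L.re := by
      rw [← Complex.normSq_eq_norm_sq, Complex.normSq_apply]
      simp at h
      linarith
    have h2 := Complex.re_le_norm L
    rw [mem_closedBall_zero_iff]
    nlinarith [norm_nonneg L]
  obtain ⟨L, -, φ, hφ, hL⟩ := (isCompact_closedBall (0 : ℂ) 1).tendsto_subseq hmem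
  refine ⟨fun z => v z - L * u z, hu.sub_const_mul hv L, ?_, ?_⟩
  · intro h
    have h1 := congrFun h 0
    have h2 := hu.deriv_sub_const_mul hv L 0
    rw [h] at h2
    simp only [hu0, hv0, hu1, hv1, Pi.zero_apply, mul_one, zero_sub, neg_eq_zero] at h1 h2
    rw [h1] at h2
    simp at h2
  · intro θ hθ t ht
    have hcast : Tendsto (fun n => ((φ n : ℕ) : ℝ)) atTop atTop :=
      tendsto_natCast_atTop_atTop.comp hφ.tendsto_atTop
    have hlim : Tendsto (fun n => robinQuot u v ((φ n : ℝ) * exp (θ * I))) atTop (𝓝 L) := by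
      have h1 := ((H.tendsto_robinQuot_sub hu hv hu0 hu1 hv0 hv1 hθ).comp hcast).add hL
      rw [zero_add] at h1
      refine h1.congr fun n => ?_
      simp [Function.comp]
    have hcont : Continuous fun L : ℂ =>
        rayEnergy (exp (-(k * θ) * I)) (exp (θ * I)) (fun z => v z - L * u z) t := by
      simp only [rayEnergy, hu.deriv_sub_const_mul hv]
      fun_prop
    refine le_of_tendsto ((hcont.tendsto L).comp hlim) ?_
    filter_upwards [hcast.eventually_ge_atTop t] with n hn
    have := (H.ray θ hθ).rayEnergy_robin_nonpos hu hv ht hn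
      (hne θ hθ (φ n) (Nat.cast_nonneg _))
    exact this

/-- Solutions of nonpositive energy decay uniformly in a coercive sector. -/
lemma SectorCoercive.norm_le {q y : ℂ → ℂ} {k Θ c : ℝ} (H : SectorCoercive q k Θ c)
    (hy : IsEntireSol q y) (hE : ∀ θ : ℝ, |θ| ≤ Θ → ∀ t : ℝ, 0 ≤ t →
      rayEnergy (exp (-(k * θ) * I)) (exp (θ * I)) y t ≤ 0) {θ t : ℝ} (hθ : |θ| ≤ Θ)
    (ht : 0 ≤ t) :
    c * ‖y (t * exp (θ * I))‖ ^ 2 ≤ ‖y 0‖ * ‖deriv y 0‖ * Real.exp (-(2 * c * t)) := by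
  have R := H.ray θ hθ
  refine (R.norm_sq_le hy (hE θ hθ) ht).trans ?_
  have h := R.monotoneOn_mul_exp hy (κ := 2 * c) (by rw [abs_of_pos (by linarith [R.pos])])
    Set.self_mem_Ici ht ht
  have h0 := neg_le_of_abs_le (abs_rayEnergy_le (e := exp (θ * I)) (y := y) (t := 0) R.norm_left)
  simp only [ofReal_zero, zero_mul, mul_zero, Real.exp_zero, mul_one] at h h0
  rw [Real.exp_neg, ← div_eq_mul_inv, le_div_iff₀ (Real.exp_pos _)]
  linarith

/-- Affine changes of the independent variable. -/
lemma IsEntireSol.comp_affine {q y : ℂ → ℂ} (hy : IsEntireSol q y) (a b : ℂ) :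
    IsEntireSol (fun z => a ^ 2 * q (a * z + b)) (fun z => y (a * z + b)) := by
  have h : ∀ z, HasDerivAt (fun z => a * z + b) a z := fun z => by
    simpa using ((hasDerivAt_id z).const_mul a).add_const b
  refine .of_hasDerivAt (y' := fun z => a * deriv y (a * z + b)) (fun z => ?_) fun z => ?_
  · exact ((hy.hasDerivAt _).comp z (h z)).congr_deriv (by ring)
  · exact (((hy.hasDerivAt_deriv _).comp z (h z)).const_mul a).congr_deriv (by ring)

/-- Two solutions agreeing to first order at a point are equal. -/
lemma IsEntireSol.eq_zero {P : Polynomial ℂ} {g : ℂ → ℂ}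
    (hg : IsEntireSol (fun z => P.eval z) g) {p : ℂ} (h0 : g p = 0) (h1 : deriv g p = 0) :
    g = 0 := by
  funext z
  obtain ⟨s, hs, hs0, hs1⟩ := exists_isEntireSol (P.comp (Polynomial.X + Polynomial.C z)) 0 1
  have hs' : IsEntireSol (fun z => P.eval z) (fun w => s (1 * w + -z)) := by
    simpa using hs.comp_affine 1 (-z)
  have hW := hg.wronskian_eq hs' z p
  have hd : deriv (fun w => s (1 * w + -z)) z = 1 := by
    simp only [one_mul]
    rw [deriv_comp_add_const, add_neg_cancel, hs1]
  simp only [h0, h1, hd] at hW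
  simpa [hs0] using hW

section Uniqueness

variable {q u v : ℂ → ℂ} {b e : ℂ} {c T : ℝ}

lemma RayCoercive.wronskian_eq_zero (H : RayCoercive q b e c T) (hu : IsEntireSol q u)
    (hv : IsEntireSol q v) (hEu : ∀ t, T ≤ t → rayEnergy b e u t ≤ 0)
    (hEv : ∀ t, T ≤ t → rayEnergy b e v t ≤ 0) (z : ℂ) :
    u z * deriv v z - deriv u z * v z = 0 := by
  by_contra hW
  set ε : ℝ := 2 * c * ‖u z * deriv v z - deriv u z * v z‖ with hε
  have hε0 : 0 < ε := mul_pos (by linarith [H.pos]) (norm_pos_iff.2 hW)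
  have hmono : MonotoneOn (fun t => rayEnergy b e u t + (rayEnergy b e v t - ε * t))
      (Set.Ici T) := by
    refine monotoneOn_rayEnergy_add hu (fun t =>
      (hasDerivAt_rayEnergy hv b e t).differentiableAt.hasDerivAt.sub
        (((hasDerivAt_id t).const_mul ε).congr_deriv (mul_one ε))) fun t ht => ?_
    have h1 := H.le_deriv hu ht
    have h2 := H.le_deriv hv ht
    have h3 := norm_sub_le (u (t * e) * deriv v (t * e)) (deriv u (t * e) * v (t * e))
    rw [hu.wronskian_eq hv _ z, norm_mul, norm_mul] at h3
    have h4 : 2 * ‖u z * deriv v z - deriv u z * v z‖ ≤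
        (‖deriv u (t * e)‖ ^ 2 + ‖u (t * e)‖ ^ 2) + (‖deriv v (t * e)‖ ^ 2 + ‖v (t * e)‖ ^ 2) := by
      nlinarith [sq_nonneg (‖u (t * e)‖ - ‖deriv v (t * e)‖),
        sq_nonneg (‖deriv u (t * e)‖ - ‖v (t * e)‖)]
    have h5 := mul_le_mul_of_nonneg_left h4 H.pos.le
    linarith
  set A := rayEnergy b e u T + rayEnergy b e v T with hA
  set s : ℝ := T + (1 - A) / ε with hs
  have hTs : T ≤ s := by
    have : 0 ≤ (1 - A) / ε := div_nonneg (by linarith [hEu T le_rfl, hEv T le_rfl]) hε0.le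
    linarith
  have h1 : rayEnergy b e u T + (rayEnergy b e v T - ε * T) ≤
      rayEnergy b e u s + (rayEnergy b e v s - ε * s) := hmono Set.self_mem_Ici hTs hTs
  have h2 : ε * s = ε * T + (1 - A) := by rw [hs]; field_simp
  linarith [hEu s hTs, hEv s hTs]

/-- Solutions of nonpositive energy along a coercive ray are proportional. -/
lemma RayCoercive.exists_eq_const_mul {P : Polynomial ℂ}
    (H : RayCoercive (fun z => P.eval z) b e c T) (hu : IsEntireSol (fun z => P.eval z) u)
    (hv : IsEntireSol (fun z => P.eval z) v) (hEu : ∀ t, T ≤ t → rayEnergy b e u t ≤ 0)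
    (hEv : ∀ t, T ≤ t → rayEnergy b e v t ≤ 0) (hu0 : u ≠ 0) :
    ∃ a : ℂ, ∀ z, v z = a * u z := by
  obtain ⟨p, hp⟩ := Function.ne_iff.1 hu0
  rw [Pi.zero_apply] at hp
  have hW := H.wronskian_eq_zero hu hv hEu hEv p
  refine ⟨v p / u p, fun z => sub_eq_zero.1 (congrFun
    ((hu.sub_const_mul hv (v p / u p)).eq_zero (p := p) ?_ ?_) z)⟩
  · field_simp; ring
  · rw [hu.deriv_sub_const_mul hv]
    field_simp
    linear_combination hW

end Uniqueness

open Polynomial in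
lemma norm_eval_le (P : ℂ[X]) {m : ℕ} (hm : P.natDegree ≤ m) {z : ℂ} {s : ℝ} (hs : 1 ≤ s)
    (hz : ‖z‖ ≤ s) :
    ‖P.eval z‖ ≤ (∑ i ∈ Finset.range (m + 1), ‖P.coeff i‖) * s ^ m := by
  rw [eval_eq_sum_range' (Nat.lt_succ_of_le hm), Finset.sum_mul]
  refine (norm_sum_le _ _).trans (Finset.sum_le_sum fun i hi => ?_)
  rw [norm_mul, norm_pow]
  have h1 : ‖z‖ ^ i ≤ s ^ i := by gcongr
  have h2 : s ^ i ≤ s ^ m := pow_le_pow_right₀ hs (Nat.lt_succ_iff.1 (Finset.mem_range.1 hi))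
  gcongr
  exact h1.trans h2

lemma cos_le_re_exp {x Φ : ℝ} (hΦ : Φ ≤ Real.pi) (hx : |x| ≤ Φ) :
    Real.cos Φ ≤ (exp (x * I)).re := by
  rw [Complex.exp_ofReal_mul_I_re, ← Real.cos_abs x]
  exact Real.cos_le_cos_of_nonneg_of_le_pi (abs_nonneg _) hΦ hx

/-- Far out on the positive axis, the weighted leading term is uniformly positive along all rays
of the sector. -/
lemma cos_mul_pow_le_re (d : ℕ) {x t Θ θ : ℝ} (hx : 0 ≤ x) (ht : 0 ≤ t)
    (hΘ : (d / 2 + 1) * Θ ≤ Real.pi) (hθ : |θ| ≤ Θ) :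
    Real.cos ((d / 2 + 1) * Θ) * (x + t) ^ d ≤
      (exp (-((d / 2 : ℝ) * θ) * I) * exp (θ * I) * (x + t * exp (θ * I)) ^ d).re := by
  rw [add_pow, add_pow, Finset.mul_sum, Finset.mul_sum, Complex.re_sum]
  refine Finset.sum_le_sum fun m hm => ?_
  have hm' : m ≤ d := Nat.lt_succ_iff.1 (Finset.mem_range.1 hm)
  have he : exp (-((d / 2 : ℝ) * θ) * I) * exp (θ * I) *
      ((x : ℂ) ^ m * (t * exp (θ * I)) ^ (d - m) * (d.choose m : ℂ)) =
      exp (((d / 2 + 1 - m) * θ : ℝ) * I) * ((x ^ m * t ^ (d - m) * d.choose m : ℝ) : ℂ) := by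
    have h1 : exp (((d / 2 + 1 - m) * θ : ℝ) * I) =
        exp (-((d / 2 : ℝ) * θ) * I) * exp (θ * I) * exp (θ * I) ^ (d - m) := by
      rw [← Complex.exp_nat_mul, ← Complex.exp_add, ← Complex.exp_add, Nat.cast_sub hm']
      congr 1
      push_cast
      ring
    rw [h1, mul_pow]
    push_cast
    ring
  rw [he, Complex.re_mul_ofReal]
  refine mul_le_mul_of_nonneg_right (cos_le_re_exp hΘ ?_) (by positivity)
  rw [abs_mul]
  have hmd : (m : ℝ) ≤ d := by exact_mod_cast hm'
  have h0 : (0 : ℝ) ≤ m := m.cast_nonneg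
  refine mul_le_mul (abs_le.2 ⟨by linarith, by linarith⟩) hθ (abs_nonneg _) (by positivity)

section Polynomial

open Polynomial ComplexConjugate

/-- After a large translation, a monic potential of degree `d` is coercive in closed subsectors of
`|θ| < π / (d + 2)`. -/
lemma exists_sectorCoercive {d : ℕ} {R : ℂ[X]} (hR : R.natDegree < d) {Θ : ℝ} (hΘ0 : 0 ≤ Θ)
    (hΘ : (d / 2 + 1) * Θ < Real.pi / 2) :
    ∃ c x : ℝ, SectorCoercive (fun z => ((X ^ d + R).comp (X + C (x : ℂ))).eval z)
      (d / 2 : ℝ) Θ c := by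
  set Φ : ℝ := (d / 2 + 1) * Θ with hΦ
  have hΦ0 : 0 ≤ Φ := by positivity
  have hΦπ : Φ ≤ Real.pi := by linarith [Real.pi_pos]
  set c := Real.cos Φ with hcdef
  have hc : 0 < c := Real.cos_pos_of_mem_Ioo ⟨by linarith, hΘ⟩
  obtain ⟨m, rfl⟩ : ∃ m, d = m + 1 := ⟨d - 1, by omega⟩
  set K : ℝ := ∑ i ∈ Finset.range (m + 1), ‖R.coeff i‖
  have hK : 0 ≤ K := Finset.sum_nonneg fun _ _ => norm_nonneg _
  set x : ℝ := 1 + K / c with hx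
  have hx1 : 1 ≤ x := by
    have : 0 ≤ K / c := by positivity
    linarith
  have hd0 : (0 : ℝ) ≤ ((m + 1 : ℕ) : ℝ) / 2 := by positivity
  refine ⟨c, x, hΘ0, fun θ hθ => ?_, ?_⟩
  · have eb : exp (-(((m + 1 : ℕ) / 2 : ℝ) * θ) * I) =
        exp ((-(((m + 1 : ℕ) / 2 : ℝ) * θ) : ℝ) * I) := by push_cast; rfl
    refine ⟨hc, ?_, Complex.norm_exp_ofReal_mul_I θ, ?_, ?_, fun t ht => ?_⟩
    · rw [eb, Complex.norm_exp_ofReal_mul_I]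
    · rw [eb]
      refine cos_le_re_exp hΦπ ?_
      rw [abs_neg, abs_mul, abs_of_nonneg hd0]
      exact mul_le_mul (by linarith) hθ (abs_nonneg _) (by linarith)
    · have : exp (-(((m + 1 : ℕ) / 2 : ℝ) * θ) * I) * conj (exp (θ * I)) =
          exp ((-(((m + 1 : ℕ) / 2 + 1 : ℝ) * θ) : ℝ) * I) := by
        rw [← Complex.exp_conj, map_mul, Complex.conj_ofReal, Complex.conj_I, ← Complex.exp_add]
        congr 1
        push_cast
        ring
      rw [this]
      refine cos_le_re_exp hΦπ ?_
      rw [abs_neg, abs_mul, abs_of_nonneg (by linarith)]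
      exact mul_le_mul le_rfl hθ (abs_nonneg _) (by linarith)
    · have hlead := cos_mul_pow_le_re (m + 1) (x := x) (by linarith) ht hΦπ hθ
      rw [← hΦ, ← hcdef] at hlead
      have hz : ‖(t : ℂ) * exp (θ * I) + x‖ ≤ x + t := by
        refine (norm_add_le _ _).trans_eq ?_
        rw [norm_mul, Complex.norm_exp_ofReal_mul_I, Complex.norm_real, Complex.norm_real,
          Real.norm_of_nonneg ht, Real.norm_of_nonneg (by linarith)]
        ring
      have hlow := norm_eval_le R (Nat.lt_succ_iff.1 hR) (by linarith : 1 ≤ x + t) hz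
      set s := x + t with hs
      have hre := neg_le_of_abs_le (Complex.abs_re_le_norm
        (exp (-(((m + 1 : ℕ) / 2 : ℝ) * θ) * I) * exp (θ * I) *
          R.eval ((t : ℂ) * exp (θ * I) + x)))
      rw [norm_mul, norm_mul, Complex.norm_exp_ofReal_mul_I, eb, Complex.norm_exp_ofReal_mul_I,
        one_mul, one_mul, ← eb] at hre
      simp only [eval_comp, eval_add, eval_pow, eval_X, eval_C, mul_add, Complex.add_re]
      rw [add_comm (x : ℂ)] at hlead
      have h1 : c * 1 ≤ s ^ m * (c * s - K) := by
        have hcs : c ≤ c * s - K := by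
          have : c * x = c + K := by rw [hx]; field_simp
          nlinarith
        have : 1 ≤ s ^ m := one_le_pow₀ (by linarith)
        nlinarith
      rw [pow_succ] at hlead
      simp only [mul_assoc] at hlead hre ⊢
      linarith
  · set Q := (X ^ (m + 1) + R).comp (X + C (x : ℂ))
    exact ⟨_, Q.natDegree, fun z => norm_eval_le Q le_rfl (by linarith [norm_nonneg z])
      (by linarith)⟩

/-- A function that decays uniformly in a sector with vertex `x` tends to `0` along the interior
rays of the parallel sector with vertex `0`. -/
lemma tendsto_ray_of_translated {y : ℂ → ℂ} {x Θ c M : ℝ} (hc : 0 < c) (hΘ : Θ ≤ Real.pi)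
    (h : ∀ θ t : ℝ, |θ| ≤ Θ → 0 ≤ t →
      c * ‖y (t * exp (θ * I) + x)‖ ^ 2 ≤ M * Real.exp (-(2 * c * t)))
    {θ : ℝ} (hθ : |θ| < Θ) :
    Tendsto (fun r : ℝ => y (r * exp (θ * I))) atTop (𝓝 0) := by
  have hθπ := abs_lt.1 (hθ.trans_le hΘ)
  set e := exp (θ * I) with he
  have harg : arg e = θ := Complex.arg_exp_mul_I θ ▸ (toIocMod_eq_self _).2
    ⟨hθπ.1, by linarith [hθπ.2]⟩
  have hslit : e ∈ slitPlane := by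
    rw [Complex.mem_slitPlane_iff_arg, harg]
    exact ⟨hθπ.2.ne, Complex.exp_ne_zero _⟩
  have hM : 0 ≤ M := by
    have := (mul_nonneg hc.le (sq_nonneg _)).trans (h θ 0 hθ.le le_rfl)
    simpa using this
  have h1 : Tendsto (fun r : ℝ => e - ((x / r : ℝ) : ℂ)) atTop (𝓝 e) := by
    have := (Complex.continuous_ofReal.tendsto 0).comp
      (tendsto_const_nhds.div_atTop tendsto_id : Tendsto (fun r : ℝ => x / r) atTop (𝓝 0))
    simpa using tendsto_const_nhds.sub this
  have h2 : ∀ᶠ r : ℝ in atTop, |arg (e - ((x / r : ℝ) : ℂ))| < Θ := by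
    have := ((Complex.continuousAt_arg hslit).tendsto.comp h1).abs
    rw [harg] at this
    exact this.eventually_lt_const hθ
  have hlim : Tendsto (fun r : ℝ => M / c * Real.exp (-(2 * c * (r - |x|)))) atTop (𝓝 0) := by
    have h3 : Tendsto (fun r : ℝ => 2 * c * (r - |x|)) atTop atTop :=
      (tendsto_atTop_add_const_right _ (-|x|) tendsto_id).const_mul_atTop (by positivity)
    simpa using (Real.tendsto_exp_neg_atTop_nhds_zero.comp h3).const_mul (M / c)
  have hsq : Tendsto (fun r : ℝ => ‖y (r * e)‖ ^ 2) atTop (𝓝 0) := by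
    refine squeeze_zero' (.of_forall fun r => sq_nonneg _) ?_ hlim
    filter_upwards [h2, eventually_gt_atTop 0] with r hr hr0
    set w := (r : ℂ) * e - x with hw
    have hwarg : arg w = arg (e - ((x / r : ℝ) : ℂ)) := by
      have hr0' : (r : ℂ) ≠ 0 := by exact_mod_cast hr0.ne'
      rw [← Complex.arg_real_mul (e - _) hr0, mul_sub, ← Complex.ofReal_mul,
        mul_div_cancel₀ x hr0.ne']
    have hwe : (‖w‖ : ℂ) * exp (arg w * I) + x = r * e := by
      rw [Complex.norm_mul_exp_arg_mul_I, hw]; ring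
    have h4 := h (arg w) ‖w‖ (hwarg ▸ hr.le) (norm_nonneg _)
    rw [hwe] at h4
    have h5 : r - |x| ≤ ‖w‖ := by
      have := norm_sub_norm_le ((r : ℂ) * e) x
      rwa [norm_mul, he, Complex.norm_exp_ofReal_mul_I, Complex.norm_real, Complex.norm_real,
        Real.norm_of_nonneg hr0.le, mul_one] at this
    rw [div_mul_eq_mul_div, le_div_iff₀ hc, mul_comm]
    refine h4.trans ?_
    gcongr
  rw [tendsto_zero_iff_norm_tendsto_zero]
  simpa [Real.sqrt_sq] using hsq.sqrt

variable {d : ℕ} {R : ℂ[X]}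

/-- The potential is coercive on the positive axis, far out. -/
lemma exists_rayCoercive (hR : R.natDegree < d) :
    ∃ c T : ℝ, RayCoercive (fun z => (X ^ d + R).eval z) 1 1 c T := by
  obtain ⟨c, x, H⟩ := exists_sectorCoercive hR le_rfl (by simpa using Real.pi_pos)
  have := H.ray 0 (by simp)
  simp only [ofReal_zero, mul_zero, neg_zero, zero_mul, Complex.exp_zero] at this
  refine ⟨c, x, this.pos, this.norm_left, this.norm_right, this.le_re_left, this.le_re_conj,
    fun t ht => ?_⟩
  simpa [eval_comp] using this.le_re_mul (t - x) (by linarith)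

lemma exists_decaying_of_subsector (hR : R.natDegree < d) {Θ : ℝ} (hΘ0 : 0 ≤ Θ)
    (hΘ : (d / 2 + 1) * Θ < Real.pi / 2) :
    ∃ y, IsEntireSol (fun z => (X ^ d + R).eval z) y ∧ y ≠ 0 ∧
      (∃ T : ℝ, ∀ t, T ≤ t → rayEnergy 1 1 y t ≤ 0) ∧
      ∀ θ : ℝ, |θ| < Θ → Tendsto (fun r : ℝ => y (r * exp (θ * I))) atTop (𝓝 0) := by
  obtain ⟨c, x, H⟩ := exists_sectorCoercive hR hΘ0 hΘ
  obtain ⟨y, hy, hy0, hE⟩ := H.exists_rayEnergy_nonpos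
  have hΘπ : Θ ≤ Real.pi := by
    have : (0 : ℝ) ≤ d / 2 * Θ := by positivity
    linarith [Real.pi_pos]
  refine ⟨fun z => y (1 * z + -x), ?_, ?_, ⟨x, fun t ht => ?_⟩, fun θ hθ => ?_⟩
  · simpa [eval_comp] using hy.comp_affine 1 (-x)
  · intro h
    refine hy0 (funext fun z => ?_)
    simpa using congrFun h (z + x)
  · have h := hE 0 (by simpa using hΘ0) (t - x) (by linarith)
    have hd : deriv (fun z => y (1 * z + -x)) t = deriv y (t - x) := by
      simp only [one_mul]
      rw [deriv_comp_add_const, sub_eq_add_neg]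
    simp only [rayEnergy, mul_one, hd]
    simpa [rayEnergy, ← sub_eq_add_neg] using h
  · refine tendsto_ray_of_translated (y := fun z => y (1 * z + -x)) (x := x) (M := ‖y 0‖ * ‖deriv y 0‖)
      (H.ray 0 (by simpa using hΘ0)).pos hΘπ (fun φ t hφ ht => ?_) hθ
    simpa using H.norm_le hy hE hφ ht

/-- A monic potential of degree `d` admits a nonzero entire solution that is subdominant in the
sector around the positive axis. -/
lemma exists_subdominant_zero (hR : R.natDegree < d) :
    ∃ y, IsEntireSol (fun z => (X ^ d + R).eval z) y ∧ y ≠ 0 ∧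
      ∀ θ : ℝ, |θ| < Real.pi / (d + 2) →
        Tendsto (fun r : ℝ => y (r * exp (θ * I))) atTop (𝓝 0) := by
  obtain ⟨c, T, H⟩ := exists_rayCoercive hR
  obtain ⟨y, hy, hy0, ⟨T₁, hE⟩, -⟩ :=
    exists_decaying_of_subsector hR le_rfl (by simpa using Real.pi_pos)
  refine ⟨y, hy, hy0, fun θ hθ => ?_⟩
  obtain ⟨Θ, hθΘ, hΘ⟩ := exists_between hθ
  have hΘ' : (d / 2 + 1) * Θ < Real.pi / 2 := by
    rw [lt_div_iff₀ (by positivity)] at hΘ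
    linarith
  obtain ⟨w, hw, hw0, ⟨T₂, hE'⟩, hlim⟩ :=
    exists_decaying_of_subsector hR ((abs_nonneg θ).trans hθΘ.le) hΘ'
  have H' : RayCoercive (fun z => (X ^ d + R).eval z) 1 1 c (max T (max T₁ T₂)) :=
    ⟨H.pos, H.norm_left, H.norm_right, H.le_re_left, H.le_re_conj,
      fun t ht => H.le_re_mul t ((le_max_left _ _).trans ht)⟩
  obtain ⟨a, ha⟩ := H'.exists_eq_const_mul hw hy
    (fun t ht => hE' t (((le_max_right _ _).trans (le_max_right _ _)).trans ht))
    (fun t ht => hE t (((le_max_left _ _).trans (le_max_right _ _)).trans ht)) hw0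
  simpa [ha] using (hlim θ hθΘ).const_mul a

end Polynomial

theorem stmt8 (d : ℕ) (hd : 2 ≤ d) (n : ℕ) (hn : n = d + 2)
    (α : Fin (d - 1) → ℂ) (lam : ℂ) (j : ℕ) (hj : j < n) :
    ∃ y : ℂ → ℂ, y ≠ 0 ∧ IsSol d α lam y ∧ Subdominant n j y := by
  have hn0 : (n : ℂ) ≠ 0 := by exact_mod_cast (by omega : n ≠ 0)
  set ζ : ℂ := exp ((2 * Real.pi * j / n : ℝ) * I) with hζ
  have hζ0 : ζ ≠ 0 := Complex.exp_ne_zero _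
  have hζn : ζ ^ (d + 2) = 1 := by
    rw [hζ, ← hn, ← Complex.exp_nat_mul, Complex.exp_eq_one_iff]
    refine ⟨j, ?_⟩
    push_cast
    field_simp
  set S : Polynomial ℂ := ∑ i : Fin (d - 1), Polynomial.C (α i) * Polynomial.X ^ ((i : ℕ) + 1) -
    Polynomial.C lam with hS
  set R : Polynomial ℂ := Polynomial.C (ζ ^ 2) * S.comp (Polynomial.C ζ * Polynomial.X) with hRdef
  have hSdeg : S.natDegree ≤ d - 1 := by
    refine (Polynomial.natDegree_sub_le _ _).trans (max_le ?_ (by simp))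
    refine Polynomial.natDegree_sum_le_of_forall_le _ _ fun i _ => ?_
    exact (Polynomial.natDegree_C_mul_X_pow_le _ _).trans (by omega)
  have hR : R.natDegree < d := by
    have h1 : R.natDegree ≤ S.natDegree * 1 :=
      (Polynomial.natDegree_C_mul_le _ _).trans (Polynomial.natDegree_comp_le.trans
        (Nat.mul_le_mul le_rfl (by simpa using Polynomial.natDegree_C_mul_X_pow_le ζ 1)))
    omega
  obtain ⟨w, hw, hw0, hlim⟩ := exists_subdominant_zero hR
  refine ⟨fun z => w (ζ⁻¹ * z + 0), fun h => hw0 (funext fun z => ?_), ?_, fun θ hθ => ?_⟩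
  · simpa [hζ0] using congrFun h (ζ * z)
  · have h := hw.comp_affine ζ⁻¹ 0
    refine ⟨h.1, fun z => (h.2 z).trans ?_⟩
    congr 1
    have hinv : ζ⁻¹ ^ 2 * ζ⁻¹ ^ d = 1 := by
      rw [← pow_add, add_comm, inv_pow, hζn, inv_one]
    have hz : ζ * (ζ⁻¹ * z) = z := mul_inv_cancel_left₀ hζ0 z
    simp only [hRdef, hS, Pol, add_zero, Polynomial.eval_add, Polynomial.eval_pow,
      Polynomial.eval_X, Polynomial.eval_mul, Polynomial.eval_C, Polynomial.eval_comp,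
      Polynomial.eval_sub, Polynomial.eval_finsetSum, hz]
    rw [mul_add, ← mul_assoc, ← mul_pow ζ⁻¹ ζ, inv_mul_cancel₀ hζ0, mul_pow, ← mul_assoc, hinv]
    ring
  · have hθ' : |θ - 2 * Real.pi * j / n| < Real.pi / (d + 2) := by
      have : (n : ℝ) = d + 2 := by rw [hn]; push_cast; ring
      rw [← this]
      exact hθ
    refine (hlim _ hθ').congr fun r => ?_
    congr 1
    rw [add_zero, hζ, ← Complex.exp_neg, mul_left_comm, ← Complex.exp_add]
    congr 2
    push_cast
    ring
end

section
/- Let d ≥ 2 and n = d + 2. Every nonzero solution y of the Schrödinger equation with parameters (α, λ) is, in each Stokes sector S_j, either subdominant or dominant: for every j ∈ {0,…,n−1}, either y(r·e^{iθ}) → 0 as r → +∞ for every θ with |θ − 2πj/n| < π/n, or |y(r·e^{iθ})| → +∞ as r → +∞ for every θ with |θ − 2πj/n| < π/n. -/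
open Complex Filter Topology

/-- Comparison for the scalar differential inequality `f' ≤ k r ^ p f` on `[R, ∞)`. -/
lemma le_mul_exp_of_deriv_le {f f' : ℝ → ℝ} {p k R : ℝ} (hp : 0 < p) (hR : 0 < R)
    (hf : ∀ r, R ≤ r → HasDerivAt f (f' r) r)
    (hle : ∀ r, R ≤ r → f' r ≤ k * r ^ p * f r) {s r : ℝ} (hs : R ≤ s) (hr : s ≤ r) :
    f r ≤ f s * Real.exp (k / (p + 1) * (r ^ (p + 1) - s ^ (p + 1))) := by
  have hd : ∀ x, R ≤ x → HasDerivAt (fun t => f t * Real.exp (-(k / (p + 1)) * t ^ (p + 1)))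
      ((f' x - k * x ^ p * f x) * Real.exp (-(k / (p + 1)) * x ^ (p + 1))) x := by
    intro x hx
    have h1 : HasDerivAt (fun t : ℝ => t ^ (p + 1)) ((p + 1) * x ^ (p + 1 - 1)) x :=
      Real.hasDerivAt_rpow_const (Or.inl (by linarith))
    have h2 := (hf x hx).mul (h1.const_mul (-(k / (p + 1)))).exp
    refine h2.congr_deriv ?_
    have : p + 1 ≠ 0 := by linarith
    rw [add_sub_cancel_right]
    field_simp
    ring
  have hanti : AntitoneOn (fun t => f t * Real.exp (-(k / (p + 1)) * t ^ (p + 1)))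
      (Set.Ici R) := by
    refine antitoneOn_of_hasDerivWithinAt_nonpos (convex_Ici R)
      (fun x hx => (hd x hx).continuousAt.continuousWithinAt)
      (fun x hx => (hd x (interior_subset hx)).hasDerivWithinAt) (fun x hx => ?_)
    exact mul_nonpos_of_nonpos_of_nonneg (by linarith [hle x (interior_subset hx)])
      (Real.exp_pos _).le
  have h := hanti (Set.mem_Ici.2 hs) (Set.mem_Ici.2 (hs.trans hr)) hr
  have h3 := mul_le_mul_of_nonneg_right h (Real.exp_pos (k / (p + 1) * r ^ (p + 1))).le
  simp only [mul_assoc, ← Real.exp_add] at h3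
  rw [neg_mul, neg_add_cancel, Real.exp_zero, mul_one] at h3
  refine h3.trans_eq (congrArg (fun t => f s * Real.exp t) ?_)
  ring

lemma tendsto_exp_rpow_div {p c : ℝ} (hp : 0 < p) (hc : 0 < c) :
    Tendsto (fun r : ℝ => Real.exp (c * r ^ (p + 1)) / r ^ p) atTop atTop := by
  have h1 : Tendsto (fun r : ℝ => r ^ (p + 1)) atTop atTop := tendsto_rpow_atTop (by linarith)
  have h2 := (tendsto_exp_mul_div_rpow_atTop (p / (p + 1)) c hc).comp h1
  refine h2.congr' ?_
  filter_upwards [eventually_gt_atTop 0] with r hr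
  simp only [Function.comp]
  rw [← Real.rpow_mul hr.le]
  congr 2
  field_simp

/-- Along a ray on which `q ~ (e r ^ p) ^ 2` with `Re e > 0`, a solution of `u'' = q u` either
blows up or decays exponentially. -/
lemma dominant_or_exp_decay {u v q : ℝ → ℂ} {e : ℂ} {p : ℝ} (hp : 0 < p)
    (hu : ∀ r, 0 < r → HasDerivAt u (v r) r) (hv : ∀ r, 0 < r → HasDerivAt v (q r * u r) r)
    (he : ‖e‖ = 1) (hm : 0 < e.re)
    (hq : ∀ ε > 0, ∀ᶠ r : ℝ in atTop, ‖q r - (e * (r ^ p : ℝ)) ^ 2‖ ≤ ε * (r ^ p) ^ 2) :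
    Tendsto (fun r => ‖u r‖) atTop atTop ∨
      ∃ C R : ℝ, ∀ r, R ≤ r → ‖u r‖ ≤ C * Real.exp (-(e.re / (2 * (p + 1)) * r ^ (p + 1))) := by
  set m := e.re with hmdef
  have hm9 : 0 < m / 9 := by positivity
  have hρ : Tendsto (fun r : ℝ => r ^ p) atTop atTop := tendsto_rpow_atTop hp
  obtain ⟨R, hR⟩ : ∃ R : ℝ, ∀ r ≥ R, 1 ≤ r ∧ p / (m / 9) ≤ r ^ p ∧
      ‖q r - (e * (r ^ p : ℝ)) ^ 2‖ ≤ m / 9 * (r ^ p) ^ 2 :=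
    eventually_atTop.1 ((eventually_ge_atTop 1).and
      ((hρ.eventually_ge_atTop _).and (hq _ hm9)))
  have hR1 : 1 ≤ R := (hR R le_rfl).1
  have hρ1 : ∀ r, R ≤ r → 1 ≤ r ^ p := fun r hr => Real.one_le_rpow (hR r hr).1 hp.le
  have hρd : ∀ r, R ≤ r → HasDerivAt (fun t : ℝ => e * ((t ^ p : ℝ) : ℂ))
      (e * ((p * r ^ (p - 1) : ℝ) : ℂ)) r := fun r hr =>
    (Real.hasDerivAt_rpow_const (Or.inl (by linarith))).ofReal_comp.const_mul e
  set A : ℝ → ℂ := fun r => v r + e * (r ^ p : ℝ) * u r with hA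
  set B : ℝ → ℂ := fun r => v r - e * (r ^ p : ℝ) * u r with hB
  have hAB : ∀ r, R ≤ r → 2 * r ^ p * ‖u r‖ = ‖A r - B r‖ := by
    intro r hr
    have : A r - B r = 2 * (e * (r ^ p : ℝ) * u r) := by simp only [hA, hB]; ring
    have h0 : 0 ≤ r ^ p := by linarith [hρ1 r hr]
    rw [this, norm_mul, norm_mul, norm_mul, he, Complex.norm_real, Real.norm_of_nonneg h0]
    simp [mul_assoc]
  have herr : ∀ r, R ≤ r → ∀ w : ℂ, ‖w‖ ≤ 2 * (m / 9) * (r ^ p) ^ 2 →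
      ‖w * u r‖ ≤ m / 9 * r ^ p * (‖A r‖ + ‖B r‖) := by
    intro r hr w hw
    have h1 : ‖w * u r‖ ≤ 2 * (m / 9) * (r ^ p) ^ 2 * ‖u r‖ := by
      rw [norm_mul]; exact mul_le_mul_of_nonneg_right hw (norm_nonneg _)
    have h2 : 2 * r ^ p * ‖u r‖ ≤ ‖A r‖ + ‖B r‖ := (hAB r hr).trans_le (norm_sub_le _ _)
    have h3 : 0 ≤ m / 9 * r ^ p := by have := hρ1 r hr; positivity
    nlinarith [mul_le_mul_of_nonneg_left h2 h3]
  have hder : ∀ r, R ≤ r → ‖e * ((p * r ^ (p - 1) : ℝ) : ℂ)‖ ≤ m / 9 * (r ^ p) ^ 2 := by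
    intro r hr
    have h1 := (hR r hr).1
    have h2 : r ^ (p - 1) ≤ r ^ p := Real.rpow_le_rpow_of_exponent_le h1 (by linarith)
    have h3 : 0 ≤ r ^ (p - 1) := Real.rpow_nonneg (by linarith) _
    have h4 : p ≤ r ^ p * (m / 9) := (div_le_iff₀ hm9).1 (hR r hr).2.1
    rw [norm_mul, he, Complex.norm_real, Real.norm_of_nonneg (by positivity), one_mul]
    calc p * r ^ (p - 1) ≤ (r ^ p * (m / 9)) * r ^ p := by gcongr
      _ = _ := by ring
  have hin : ∀ (r : ℝ) (z : ℂ), inner ℝ z (e * (r ^ p : ℝ) * z) = m * r ^ p * ‖z‖ ^ 2 := by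
    intro r z
    rw [Complex.inner, mul_assoc (e * _), Complex.mul_conj, mul_assoc, ← Complex.ofReal_mul,
      Complex.re_mul_ofReal, Complex.normSq_eq_norm_sq, mul_assoc]
  have hA2 : ∀ r, R ≤ r → ∃ D, HasDerivAt (fun t => ‖A t‖ ^ 2) D r ∧
      2 * (m * r ^ p * ‖A r‖ ^ 2 - m / 9 * r ^ p * (‖A r‖ * (‖A r‖ + ‖B r‖))) ≤ D := by
    intro r hr
    have hr0 : 0 < r := by linarith
    set w := q r - (e * (r ^ p : ℝ)) ^ 2 + e * ((p * r ^ (p - 1) : ℝ) : ℂ) with hw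
    have hd : HasDerivAt A (e * (r ^ p : ℝ) * A r + w * u r) r := by
      refine ((hv r hr0).add ((hρd r hr).mul (hu r hr0))).congr_deriv ?_
      simp only [hA, hw]; ring
    refine ⟨_, hd.norm_sq, ?_⟩
    have hwn : ‖w * u r‖ ≤ m / 9 * r ^ p * (‖A r‖ + ‖B r‖) := by
      refine herr r hr w ((norm_add_le _ _).trans ?_)
      linarith [(hR r hr).2.2, hder r hr]
    have h1 := (abs_le.1 (abs_real_inner_le_norm (A r) (w * u r))).1
    have h2 := mul_le_mul_of_nonneg_left hwn (norm_nonneg (A r))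
    rw [inner_add_right, hin]
    linarith
  have hB2 : ∀ r, R ≤ r → ∃ D, HasDerivAt (fun t => ‖B t‖ ^ 2) D r ∧
      D ≤ 2 * (-(m * r ^ p * ‖B r‖ ^ 2) + m / 9 * r ^ p * (‖B r‖ * (‖A r‖ + ‖B r‖))) := by
    intro r hr
    have hr0 : 0 < r := by linarith
    set w := q r - (e * (r ^ p : ℝ)) ^ 2 - e * ((p * r ^ (p - 1) : ℝ) : ℂ) with hw
    have hd : HasDerivAt B (-(e * (r ^ p : ℝ) * B r) + w * u r) r := by
      refine ((hv r hr0).sub ((hρd r hr).mul (hu r hr0))).congr_deriv ?_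
      simp only [hB, hw]; ring
    refine ⟨_, hd.norm_sq, ?_⟩
    have hwn : ‖w * u r‖ ≤ m / 9 * r ^ p * (‖A r‖ + ‖B r‖) := by
      refine herr r hr w ((norm_sub_le _ _).trans ?_)
      linarith [(hR r hr).2.2, hder r hr]
    have h1 := (abs_le.1 (abs_real_inner_le_norm (B r) (w * u r))).2
    have h2 := mul_le_mul_of_nonneg_left hwn (norm_nonneg (B r))
    rw [inner_add_right, inner_neg_right, hin]
    linarith
  choose! DA hDA hDA' using hA2
  choose! DB hDB hDB' using hB2
  by_cases hdom : ∃ s, R ≤ s ∧ 2 * ‖B s‖ < ‖A s‖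
  · left
    obtain ⟨s, hs, hsAB⟩ := hdom
    have hcone : ∀ r, s ≤ r → 2 * ‖B r‖ ≤ ‖A r‖ := by
      intro r hr
      have h := le_mul_exp_of_deriv_le (f := fun t => 4 * ‖B t‖ ^ 2 - ‖A t‖ ^ 2)
        (f' := fun t => 4 * DB t - DA t) (k := 0) hp (by linarith : 0 < R)
        (fun t ht => ((hDB t ht).const_mul 4).sub (hDA t ht)) (fun t ht => ?_) hs hr
      · simp only [zero_div, zero_mul, Real.exp_zero, mul_one] at h
        have h1 : 4 * ‖B s‖ ^ 2 ≤ ‖A s‖ ^ 2 := by nlinarith [norm_nonneg (B s)]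
        exact le_of_sq_le_sq (by nlinarith) (norm_nonneg _)
      · have h1 := hDA' t ht
        have h2 := hDB' t ht
        have h3 : 0 ≤ m * t ^ p := by have := hρ1 t ht; positivity
        have h4 : 0 ≤ m * t ^ p * (‖A t‖ - 2 * ‖B t‖) ^ 2 := by positivity
        have h5 : 0 ≤ m * t ^ p * ‖A t‖ ^ 2 := by positivity
        have h6 : 0 ≤ m * t ^ p * ‖B t‖ ^ 2 := by positivity
        simp only [zero_mul]
        nlinarith
    have hgrow : ∀ r, s ≤ r →
        ‖A s‖ ^ 2 * Real.exp (m / (p + 1) * (r ^ (p + 1) - s ^ (p + 1))) ≤ ‖A r‖ ^ 2 := by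
      intro r hr
      have h := le_mul_exp_of_deriv_le (f := fun t => -‖A t‖ ^ 2)
        (f' := fun t => - DA t) (k := m) hp (by linarith : 0 < s)
        (fun t ht => (hDA t (hs.trans ht)).neg) (fun t ht => ?_) le_rfl hr
      · linarith
      · have h1 := hDA' t (hs.trans ht)
        have h3 : 0 ≤ m * t ^ p * ‖A t‖ := by
          have := hρ1 t (hs.trans ht); positivity
        nlinarith [mul_le_mul_of_nonneg_left (hcone t ht) h3,
          mul_nonneg h3 (norm_nonneg (A t))]
    set c := m / (2 * (p + 1)) with hc
    have hgrow' : ∀ r, s ≤ r →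
        ‖A s‖ * Real.exp (-(c * s ^ (p + 1))) * Real.exp (c * r ^ (p + 1)) ≤ ‖A r‖ := by
      intro r hr
      refine le_of_sq_le_sq ?_ (norm_nonneg _)
      refine (hgrow r hr).trans' (le_of_eq ?_)
      rw [mul_assoc, ← Real.exp_add, mul_pow, ← Real.exp_nat_mul]
      congr 2
      rw [hc]; push_cast; field_simp; ring
    have hAs : 0 < ‖A s‖ := by linarith [norm_nonneg (B s)]
    have hlim := (tendsto_exp_rpow_div (c := c) hp (by positivity)).const_mul_atTop
      (show 0 < ‖A s‖ * Real.exp (-(c * s ^ (p + 1))) / 4 by positivity)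
    refine tendsto_atTop_mono' _ ?_ hlim
    filter_upwards [eventually_ge_atTop s] with r hr
    have h1 := hρ1 r (hs.trans hr)
    have h2 := hAB r (hs.trans hr)
    have h3 : ‖A r‖ - ‖B r‖ ≤ ‖A r - B r‖ := norm_sub_norm_le _ _
    rw [← mul_div_assoc, div_le_iff₀ (by linarith)]
    linarith [hcone r hr, hgrow' r hr]
  · right
    push Not at hdom
    have hdec : ∀ r, R ≤ r →
        ‖B r‖ ^ 2 ≤ ‖B R‖ ^ 2 * Real.exp (-m / (p + 1) * (r ^ (p + 1) - R ^ (p + 1))) := by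
      intro r hr
      refine le_mul_exp_of_deriv_le (f := fun t => ‖B t‖ ^ 2) (f' := DB) (k := -m) hp
        (by linarith : 0 < R) hDB (fun t ht => ?_) le_rfl hr
      have h1 := hDB' t ht
      have h3 : 0 ≤ m * t ^ p * ‖B t‖ := by have := hρ1 t ht; positivity
      nlinarith [mul_le_mul_of_nonneg_left (hdom t ht) h3, mul_nonneg h3 (norm_nonneg (B t))]
    set c := m / (2 * (p + 1)) with hc
    refine ⟨‖B R‖ * Real.exp (c * R ^ (p + 1)) * (3 / 2), R, fun r hr => ?_⟩
    have hBr : ‖B r‖ ≤ ‖B R‖ * Real.exp (c * R ^ (p + 1)) * Real.exp (-(c * r ^ (p + 1))) := by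
      refine le_of_sq_le_sq ?_ (by positivity)
      refine (hdec r hr).trans (le_of_eq ?_)
      rw [mul_assoc, ← Real.exp_add, mul_pow, ← Real.exp_nat_mul]
      congr 2
      rw [hc]; push_cast; field_simp; ring
    have h1 := hρ1 r hr
    have h2 := hAB r hr
    have h3 : ‖A r - B r‖ ≤ ‖A r‖ + ‖B r‖ := norm_sub_le _ _
    have h4 : ‖u r‖ ≤ r ^ p * ‖u r‖ := le_mul_of_one_le_left (norm_nonneg _) h1
    linarith [hdom r hr]

lemma hasDerivAt_comp_ray {f : ℂ → ℂ} (hf : Differentiable ℂ f) (w : ℂ) (r : ℝ) :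
    HasDerivAt (fun t : ℝ => f (t * w)) (w * deriv f (r * w)) r := by
  have h1 : HasDerivAt (fun z : ℂ => f (z * w)) (deriv f (r * w) * w) (r : ℂ) := by
    have h2 : HasDerivAt (fun z : ℂ => z * w) w (r : ℂ) := by
      simpa using (hasDerivAt_id (r : ℂ)).mul_const w
    exact (hf _).hasDerivAt.comp (r : ℂ) h2
  simpa [mul_comm] using h1.comp_ofReal

/-- Solutions of `y'' = Q y` with `Q = O(|z| ^ (2 p))` have order at most `p + 1` and finite
type. -/
lemma exists_growth_bound {y Q : ℂ → ℂ} {p K : ℝ} (hp : 0 < p) (hK : 0 ≤ K)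
    (hy : Differentiable ℂ y) (hode : ∀ z, deriv (deriv y) z = Q z * y z)
    (hQ : ∀ z, 1 ≤ ‖z‖ → ‖Q z‖ ≤ K * (‖z‖ ^ p) ^ 2) :
    ∃ C M : ℝ, 0 ≤ C ∧ 0 ≤ M ∧ ∀ z, ‖y z‖ ≤ C * Real.exp (M * ‖z‖ ^ (p + 1)) := by
  have hy' : Differentiable ℂ (deriv y) := hy.deriv
  obtain ⟨C₁, hC₁⟩ := (isCompact_closedBall (0 : ℂ) 1).exists_bound_of_continuousOn
    (f := fun z => ‖deriv y z‖ ^ 2 + ‖y z‖ ^ 2)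
    ((hy'.continuous.norm.pow 2).add (hy.continuous.norm.pow 2)).continuousOn
  have hC : ∀ z : ℂ, ‖z‖ ≤ 1 → ‖deriv y z‖ ^ 2 + ‖y z‖ ^ 2 ≤ C₁ := fun z hz =>
    (le_abs_self _).trans (hC₁ z (by simpa using hz))
  have hC₁0 : 0 ≤ C₁ := (norm_nonneg _).trans (hC₁ 0 (by simp))
  have hC₁2 : C₁ ≤ (C₁ + 1) ^ 2 := by nlinarith
  set k := K + 1 + 2 * p with hk
  refine ⟨C₁ + 1, k / (2 * (p + 1)), by linarith, by positivity, fun z => ?_⟩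
  rcases le_total ‖z‖ 1 with hz | hz
  · have h1 : ‖y z‖ ≤ C₁ + 1 :=
      le_of_sq_le_sq (by nlinarith [hC z hz, sq_nonneg ‖deriv y z‖]) (by linarith)
    refine h1.trans (le_mul_of_one_le_right (by linarith) (Real.one_le_exp (by positivity)))
  set w : ℂ := z / ‖z‖ with hw
  have hz0 : (‖z‖ : ℂ) ≠ 0 := by
    have : ‖z‖ ≠ 0 := by linarith
    exact_mod_cast this
  have hzw : (‖z‖ : ℂ) * w = z := by rw [hw]; field_simp
  have hw1 : ‖w‖ = 1 := by
    rw [hw, norm_div, Complex.norm_real, norm_norm]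
    exact div_self (by linarith)
  set u : ℝ → ℂ := fun r => y (r * w) with hu
  set v : ℝ → ℂ := fun r => w * deriv y (r * w) with hv
  have hdu : ∀ r, HasDerivAt u (v r) r := hasDerivAt_comp_ray hy w
  have hdv : ∀ r : ℝ, HasDerivAt v (w ^ 2 * Q (r * w) * u r) r := fun r => by
    refine ((hasDerivAt_comp_ray hy' w r).const_mul w).congr_deriv ?_
    rw [hode]; ring
  have hdρ : ∀ r : ℝ, 1 ≤ r → HasDerivAt (fun t : ℝ => (t ^ p) ^ 2)
      (2 * r ^ p * (p * r ^ (p - 1))) r := fun r hr => by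
    refine ((Real.hasDerivAt_rpow_const (p := p) (Or.inl (by linarith))).pow 2).congr_deriv ?_
    simp
  have hE := le_mul_exp_of_deriv_le (p := p) (k := k) (R := 1)
    (f := fun r => ‖v r‖ ^ 2 + (r ^ p) ^ 2 * ‖u r‖ ^ 2) hp one_pos
    (fun r hr => (hdv r).norm_sq.add ((hdρ r hr).mul (hdu r).norm_sq)) (fun r hr => ?_) le_rfl hz
  · simp only [Real.one_rpow, one_pow, one_mul] at hE
    have h1 : ‖v 1‖ ^ 2 + ‖u 1‖ ^ 2 ≤ (C₁ + 1) ^ 2 := by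
      refine le_trans ?_ hC₁2
      have := hC w hw1.le
      simpa [hv, hu, hw1] using this
    have h2 : ‖u ‖z‖‖ ^ 2 ≤ (‖z‖ ^ p) ^ 2 * ‖u ‖z‖‖ ^ 2 :=
      le_mul_of_one_le_left (sq_nonneg _) (one_le_pow₀ (Real.one_le_rpow hz hp.le))
    have h3 : Real.exp (k / (p + 1) * (‖z‖ ^ (p + 1) - 1)) ≤
        Real.exp (k / (p + 1) * ‖z‖ ^ (p + 1)) :=
      Real.exp_le_exp.2 (mul_le_mul_of_nonneg_left (by linarith) (by positivity))
    have h4 : u ‖z‖ = y z := by simp only [hu, hzw]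
    rw [h4] at h2 hE
    refine le_of_sq_le_sq ?_ (by positivity)
    calc ‖y z‖ ^ 2 ≤ (‖v 1‖ ^ 2 + ‖u 1‖ ^ 2) *
          Real.exp (k / (p + 1) * (‖z‖ ^ (p + 1) - 1)) := by
            linarith [sq_nonneg ‖v ‖z‖‖]
      _ ≤ (C₁ + 1) ^ 2 * Real.exp (k / (p + 1) * ‖z‖ ^ (p + 1)) := by gcongr
      _ = _ := by
        rw [mul_pow, ← Real.exp_nat_mul]
        congr 2
        push_cast; field_simp
  · have hr0 : (0 : ℝ) < r := by linarith
    have hρ1 : 1 ≤ r ^ p := Real.one_le_rpow hr hp.le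
    have hnr : ‖(r : ℂ) * w‖ = r := by
      rw [norm_mul, hw1, Complex.norm_real, Real.norm_of_nonneg hr0.le, mul_one]
    have hq : ‖w ^ 2 * Q (r * w) * u r‖ ≤ K * (r ^ p) ^ 2 * ‖u r‖ := by
      rw [norm_mul, norm_mul, norm_pow, hw1, one_pow, one_mul]
      have := hQ (r * w) (by rw [hnr]; exact hr)
      rw [hnr] at this
      gcongr
    have h1 : inner ℝ (v r) (w ^ 2 * Q (r * w) * u r) ≤ ‖v r‖ * (K * (r ^ p) ^ 2 * ‖u r‖) :=
      (real_inner_le_norm _ _).trans (by gcongr)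
    have h2 : (r ^ p) ^ 2 * inner ℝ (u r) (v r) ≤ (r ^ p) ^ 2 * (‖u r‖ * ‖v r‖) := by
      gcongr
      exact real_inner_le_norm _ _
    have h3 : r ^ (p - 1) ≤ r ^ p := Real.rpow_le_rpow_of_exponent_le hr (by linarith)
    have h4 : 2 * r ^ p * (p * r ^ (p - 1)) * ‖u r‖ ^ 2 ≤
        2 * p * r ^ p * ((r ^ p) ^ 2 * ‖u r‖ ^ 2) := by
      have h5 : r ^ (p - 1) * (r ^ p * ‖u r‖ ^ 2 * p) ≤
          (r ^ p * r ^ p) * (r ^ p * ‖u r‖ ^ 2 * p) := by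
        refine mul_le_mul_of_nonneg_right (h3.trans (le_mul_of_one_le_left ?_ hρ1)) ?_ <;> positivity
      linarith
    have h6 : 0 ≤ (K + 1) * r ^ p * (‖v r‖ - r ^ p * ‖u r‖) ^ 2 := by positivity
    have h7 : 0 ≤ 2 * p * r ^ p * ‖v r‖ ^ 2 := by positivity
    simp only [hk]
    linarith

lemma norm_comp_exp_mul_exp (y : ℂ → ℂ) (γ : ℂ) (p : ℝ) (ζ : ℂ) :
    ‖y (Complex.exp ζ) * Complex.exp (-(γ * Complex.exp (((p + 1 : ℝ) : ℂ) * ζ)))‖ =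
      ‖y ((Real.exp ζ.re : ℝ) * Complex.exp (ζ.im * I))‖ *
        Real.exp (-((γ * Complex.exp (((p + 1) * ζ.im : ℝ) * I)).re *
          Real.exp ζ.re ^ (p + 1))) := by
  have h1 : Complex.exp ζ = (Real.exp ζ.re : ℝ) * Complex.exp (ζ.im * I) := by
    rw [Complex.ofReal_exp, ← Complex.exp_add, Complex.re_add_im]
  have h2 : Complex.exp (((p + 1 : ℝ) : ℂ) * ζ) =
      Complex.exp (((p + 1) * ζ.im : ℝ) * I) * ((Real.exp ζ.re ^ (p + 1) : ℝ) : ℂ) := by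
    rw [← Real.exp_mul, Complex.ofReal_exp, ← Complex.exp_add]
    congr 1
    conv_lhs => rw [← Complex.re_add_im ζ]
    push_cast; ring
  rw [norm_mul, Complex.norm_exp, h2, ← mul_assoc, Complex.neg_re, Complex.re_mul_ofReal, ← h1]

/-- Phragmén–Lindelöf in a sector of opening less than `π / (p + 1)`, against the comparison
function `exp (γ z ^ (p + 1))`. -/
lemma norm_le_of_sector {y : ℂ → ℂ} (hy : Differentiable ℂ y) {p C M C' a b : ℝ} (hp : 0 < p)
    (hC : 0 ≤ C) (hM : 0 ≤ M) (hgrow : ∀ z, ‖y z‖ ≤ C * Real.exp (M * ‖z‖ ^ (p + 1)))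
    (hlt : p + 1 < Real.pi / (b - a)) {γ : ℂ}
    (hb : ∀ r : ℝ, 0 < r → ∀ θ : ℝ, θ = a ∨ θ = b → ‖y (r * Complex.exp (θ * I))‖ ≤
      C' * Real.exp ((γ * Complex.exp (((p + 1) * θ : ℝ) * I)).re * r ^ (p + 1)))
    {θ r : ℝ} (hθa : a ≤ θ) (hθb : θ ≤ b) (hr : 0 < r) :
    ‖y (r * Complex.exp (θ * I))‖ ≤
      C' * Real.exp ((γ * Complex.exp (((p + 1) * θ : ℝ) * I)).re * r ^ (p + 1)) := by
  set f : ℂ → ℂ := fun ζ =>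
    y (Complex.exp ζ) * Complex.exp (-(γ * Complex.exp (((p + 1 : ℝ) : ℂ) * ζ))) with hf
  have hfd : Differentiable ℂ f := by
    refine (hy.comp Complex.differentiable_exp).mul ?_
    fun_prop
  have hbd : ∀ ζ : ℂ, ζ.im = a ∨ ζ.im = b → ‖f ζ‖ ≤ C' := by
    intro ζ hζ
    rw [hf, norm_comp_exp_mul_exp, Real.exp_neg, ← div_eq_mul_inv, div_le_iff₀ (Real.exp_pos _)]
    exact hb _ (Real.exp_pos _) _ hζ
  have hO : f =O[comap (_root_.abs ∘ re) atTop ⊓ 𝓟 (im ⁻¹' Set.Ioo a b)]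
      fun z => Real.exp ((M + ‖γ‖) * Real.exp ((p + 1) * |z.re|)) := by
    refine Asymptotics.IsBigO.of_bound C (Eventually.of_forall fun ζ => ?_)
    rw [hf, norm_comp_exp_mul_exp, Real.norm_of_nonneg (Real.exp_pos _).le]
    set X := Real.exp ζ.re ^ (p + 1) with hX
    have hX0 : 0 ≤ X := by positivity
    have hXle : X ≤ Real.exp ((p + 1) * |ζ.re|) := by
      rw [hX, ← Real.exp_mul, mul_comm]
      exact Real.exp_le_exp.2 (mul_le_mul_of_nonneg_left (le_abs_self _) (by linarith))
    have hg := hgrow ((Real.exp ζ.re : ℝ) * Complex.exp (ζ.im * I))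
    rw [norm_mul, Complex.norm_exp_ofReal_mul_I, mul_one, Complex.norm_real,
      Real.norm_of_nonneg (Real.exp_pos _).le] at hg
    set G := (γ * Complex.exp (((p + 1) * ζ.im : ℝ) * I)).re with hG
    have hGle : -G ≤ ‖γ‖ := by
      refine (neg_le_abs _).trans ((Complex.abs_re_le_norm _).trans_eq ?_)
      rw [norm_mul, Complex.norm_exp_ofReal_mul_I, mul_one]
    calc _ ≤ C * Real.exp (M * X) * Real.exp (-(G * X)) := by gcongr
      _ = C * Real.exp ((M - G) * X) := by rw [mul_assoc, ← Real.exp_add]; congr 2; ring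
      _ ≤ _ := by
        refine mul_le_mul_of_nonneg_left (Real.exp_le_exp.2 ?_) hC
        calc (M - G) * X ≤ (M + ‖γ‖) * X := mul_le_mul_of_nonneg_right (by linarith) hX0
          _ ≤ _ := mul_le_mul_of_nonneg_left hXle (by positivity)
  have h := PhragmenLindelof.horizontal_strip (z := (Real.log r : ℝ) + (θ : ℝ) * I)
    hfd.diffContOnCl ⟨p + 1, hlt, _, hO⟩ (fun z hz => hbd z (Or.inl hz))
    (fun z hz => hbd z (Or.inr hz)) (by simpa using hθa) (by simpa using hθb)
  rw [hf, norm_comp_exp_mul_exp, Real.exp_neg, ← div_eq_mul_inv,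
    div_le_iff₀ (Real.exp_pos _)] at h
  simpa [Real.exp_log hr] using h

lemma re_rotated_mul_exp (c N x θ₀ θ : ℝ) :
    (Complex.exp (((-(x * θ₀) : ℝ) : ℂ) * I) * (-(c : ℂ) - N * I) *
      Complex.exp ((x * θ : ℝ) * I)).re =
      -c * Real.cos (x * (θ - θ₀)) + N * Real.sin (x * (θ - θ₀)) := by
  have : Complex.exp (((-(x * θ₀) : ℝ) : ℂ) * I) * (-(c : ℂ) - N * I) *
      Complex.exp ((x * θ : ℝ) * I) =
      (-(c : ℂ) - N * I) * Complex.exp ((x * (θ - θ₀) : ℝ) * I) := by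
    rw [mul_comm (Complex.exp _), mul_assoc, ← Complex.exp_add]
    congr 2
    push_cast; ring
  rw [this, Complex.mul_re, Complex.exp_ofReal_mul_I_re, Complex.exp_ofReal_mul_I_im]
  simp

/-- Exponential decay along one ray propagates to the nearby rays. -/
lemma tendsto_zero_of_decay_on_ray {y : ℂ → ℂ} (hy : Differentiable ℂ y)
    {p C M c C' θ₀ θ : ℝ} (hp : 0 < p)
    (hC : 0 ≤ C) (hM : 0 ≤ M) (hgrow : ∀ z, ‖y z‖ ≤ C * Real.exp (M * ‖z‖ ^ (p + 1)))
    (hdec : ∀ r : ℝ, 0 < r →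
      ‖y (r * Complex.exp (θ₀ * I))‖ ≤ C' * Real.exp (-(c * r ^ (p + 1))))
    (hθ : |θ - θ₀| < Real.pi / (2 * (p + 1)))
    (hneg : -c * Real.cos ((p + 1) * (θ - θ₀)) + M * |Real.sin ((p + 1) * (θ - θ₀))| < 0) :
    Tendsto (fun r : ℝ => y (r * Complex.exp (θ * I))) atTop (𝓝 0) := by
  set δ := Real.pi / (2 * (p + 1)) with hδ
  have hp1 : 0 < p + 1 := by linarith
  have hδ0 : 0 < δ := by have := Real.pi_pos; positivity
  have hδp : (p + 1) * δ = Real.pi / 2 := by rw [hδ]; field_simp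
  have hlt : p + 1 < Real.pi / δ := by
    rw [lt_div_iff₀ hδ0, hδp]; linarith [Real.pi_pos]
  have hray : ∀ (r : ℝ), 0 < r → ∀ t : ℝ, ‖y (r * Complex.exp (t * I))‖ ≤
      max C C' * Real.exp (M * r ^ (p + 1)) := fun r hr t => by
    have h := hgrow (r * Complex.exp (t * I))
    rw [norm_mul, Complex.norm_exp_ofReal_mul_I, mul_one, Complex.norm_real,
      Real.norm_of_nonneg hr.le] at h
    exact h.trans (mul_le_mul_of_nonneg_right (le_max_left _ _) (Real.exp_pos _).le)
  have hray₀ : ∀ (r : ℝ), 0 < r → ‖y (r * Complex.exp (θ₀ * I))‖ ≤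
      max C C' * Real.exp (-c * r ^ (p + 1)) := fun r hr => by
    rw [neg_mul]
    exact (hdec r hr).trans (mul_le_mul_of_nonneg_right (le_max_right _ _) (Real.exp_pos _).le)
  have hbound : ∀ r : ℝ, 0 < r → ‖y (r * Complex.exp (θ * I))‖ ≤ max C C' *
      Real.exp ((-c * Real.cos ((p + 1) * (θ - θ₀)) + M * |Real.sin ((p + 1) * (θ - θ₀))|) *
        r ^ (p + 1)) := by
    intro r hr
    rcases le_total θ₀ θ with h0 | h0
    · rw [abs_of_nonneg (by linarith)] at hθ
      rw [abs_of_nonneg (Real.sin_nonneg_of_nonneg_of_le_pi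
        (mul_nonneg hp1.le (by linarith)) (by nlinarith [Real.pi_pos])), ← re_rotated_mul_exp]
      refine norm_le_of_sector hy hp hC hM hgrow (a := θ₀) (b := θ₀ + δ) (by simpa using hlt)
        (fun s hs t ht => ?_) h0 (by linarith) hr
      rw [re_rotated_mul_exp]
      rcases ht with rfl | rfl
      · simpa using hray₀ s hs
      · rw [add_sub_cancel_left, hδp]
        simpa using hray s hs (θ₀ + δ)
    · rw [abs_of_nonpos (by linarith)] at hθ
      rw [abs_of_nonpos (Real.sin_nonpos_of_nonpos_of_neg_pi_le
        (mul_nonpos_of_nonneg_of_nonpos hp1.le (by linarith)) (by nlinarith [Real.pi_pos])),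
        mul_neg, ← neg_mul, ← re_rotated_mul_exp]
      refine norm_le_of_sector hy hp hC hM hgrow (a := θ₀ - δ) (b := θ₀) (by simpa using hlt)
        (fun s hs t ht => ?_) (by linarith) h0 hr
      rw [re_rotated_mul_exp]
      rcases ht with rfl | rfl
      · rw [sub_sub_cancel_left, mul_neg, hδp]
        simpa using hray s hs (θ₀ - δ)
      · simpa using hray₀ s hs
  have hlim : Tendsto (fun r : ℝ => max C C' *
      Real.exp ((-c * Real.cos ((p + 1) * (θ - θ₀)) + M * |Real.sin ((p + 1) * (θ - θ₀))|) *
        r ^ (p + 1))) atTop (𝓝 0) := by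
    have h := (Real.tendsto_exp_atBot.comp
      ((tendsto_rpow_atTop hp1).const_mul_atTop_of_neg hneg)).const_mul (max C C')
    simpa using h
  exact squeeze_zero_norm' ((eventually_gt_atTop 0).mono hbound) hlim

lemma exists_norm_Pol_sub_le (d : ℕ) (α : Fin (d - 1) → ℂ) (lam : ℂ) :
    ∃ K : ℝ, 0 ≤ K ∧ ∀ z : ℂ, 1 ≤ ‖z‖ → ‖Pol d α z - lam - z ^ d‖ ≤ K * ‖z‖ ^ (d - 1) := by
  refine ⟨(∑ i, ‖α i‖) + ‖lam‖, by positivity, fun z hz => ?_⟩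
  have h1 : Pol d α z - lam - z ^ d = (∑ i : Fin (d - 1), α i * z ^ ((i : ℕ) + 1)) - lam := by
    rw [Pol]; ring
  rw [h1, add_mul, Finset.sum_mul]
  refine (norm_sub_le _ _).trans (add_le_add ((norm_sum_le _ _).trans
    (Finset.sum_le_sum fun i _ => ?_)) (le_mul_of_one_le_right (norm_nonneg _)
      (one_le_pow₀ hz)))
  rw [norm_mul, norm_pow]
  have : (i : ℕ) + 1 ≤ d - 1 := i.2
  gcongr

lemma rpow_half_sq {r : ℝ} (hr : 0 ≤ r) (d : ℕ) : (r ^ ((d : ℝ) / 2)) ^ 2 = r ^ d := by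
  rw [← Real.rpow_natCast (r ^ ((d : ℝ) / 2)), ← Real.rpow_mul hr, ← Real.rpow_natCast]
  congr 1
  push_cast; ring

/-- On a ray of a Stokes sector a solution either blows up or decays exponentially. -/
lemma dominant_or_decay_on_ray {d : ℕ} (hd : 2 ≤ d) {α : Fin (d - 1) → ℂ} {lam : ℂ} {y : ℂ → ℂ}
    (hy : IsSol d α lam y) (j : ℕ) {θ : ℝ}
    (hθ : 0 < Real.cos (((d : ℝ) / 2 + 1) * θ - Real.pi * j)) :
    Tendsto (fun r : ℝ => ‖y (r * Complex.exp (θ * I))‖) atTop atTop ∨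
      ∃ C R : ℝ, ∀ r, R ≤ r → ‖y (r * Complex.exp (θ * I))‖ ≤
        C * Real.exp (-(Real.cos (((d : ℝ) / 2 + 1) * θ - Real.pi * j) /
          (2 * ((d : ℝ) / 2 + 1)) * r ^ ((d : ℝ) / 2 + 1))) := by
  obtain ⟨K, hK, hPol⟩ := exists_norm_Pol_sub_le d α lam
  set w : ℂ := Complex.exp (θ * I) with hw
  have hw1 : ‖w‖ = 1 := Complex.norm_exp_ofReal_mul_I θ
  set φ : ℝ := ((d : ℝ) / 2 + 1) * θ - Real.pi * j with hφ
  have he2 : Complex.exp (φ * I) ^ 2 = w ^ (d + 2) := by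
    rw [hw, ← Complex.exp_nat_mul, ← Complex.exp_nat_mul]
    have : ((2 : ℕ) : ℂ) * (φ * I) = ((d + 2 : ℕ) : ℂ) * (θ * I) - j * (2 * Real.pi * I) := by
      rw [hφ]; push_cast; ring
    rw [this, Complex.exp_sub, Complex.exp_nat_mul_two_pi_mul_I, div_one]
  have hre : (Complex.exp (φ * I)).re = Real.cos φ := Complex.exp_ofReal_mul_I_re φ
  have hp : (0 : ℝ) < (d : ℝ) / 2 := by
    have : (2 : ℝ) ≤ d := by exact_mod_cast hd
    linarith
  rw [← hre] at hθ ⊢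
  refine dominant_or_exp_decay (u := fun r : ℝ => y (r * w))
    (q := fun r : ℝ => w ^ 2 * (Pol d α (r * w) - lam)) hp
    (fun r _ => hasDerivAt_comp_ray hy.1 w r) (fun r _ => ?_)
    (Complex.norm_exp_ofReal_mul_I φ) hθ (fun ε hε => ?_)
  · refine ((hasDerivAt_comp_ray hy.1.deriv w r).const_mul w).congr_deriv ?_
    rw [hy.2]; ring
  · filter_upwards [eventually_ge_atTop 1, eventually_ge_atTop (K / ε)] with r hr1 hrK
    have hr0 : 0 ≤ r := by linarith
    have hnr : ‖(r : ℂ) * w‖ = r := by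
      rw [norm_mul, hw1, Complex.norm_real, Real.norm_of_nonneg hr0, mul_one]
    have h1 : w ^ 2 * (Pol d α (r * w) - lam) -
        (Complex.exp (φ * I) * (r ^ ((d : ℝ) / 2) : ℝ)) ^ 2 =
        w ^ 2 * (Pol d α (r * w) - lam - (r * w) ^ d) := by
      rw [mul_pow, he2, ← Complex.ofReal_pow, rpow_half_sq hr0]
      push_cast; ring
    rw [h1, norm_mul, norm_pow, hw1, one_pow, one_mul, rpow_half_sq hr0]
    have h2 := hPol (r * w) (by rw [hnr]; exact hr1)
    rw [hnr] at h2
    calc _ ≤ K * r ^ (d - 1) := h2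
      _ ≤ (r * ε) * r ^ (d - 1) := by
        gcongr
        exact (div_le_iff₀ hε).1 hrK
      _ = ε * r ^ (d - 1 + 1) := by ring
      _ = _ := by rw [Nat.sub_add_cancel (by omega)]

theorem stmt10 (d : ℕ) (hd : 2 ≤ d) (n : ℕ) (hn : n = d + 2)
    (α : Fin (d - 1) → ℂ) (lam : ℂ) (y : ℂ → ℂ)
    (hy : IsSol d α lam y) (hy0 : y ≠ 0) (j : ℕ) (hj : j < n) :
    (∀ θ : ℝ, DirIn n j θ →
        Tendsto (fun r : ℝ => y ((r : ℂ) * Complex.exp (θ * Complex.I))) atTop (𝓝 0)) ∨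
    (∀ θ : ℝ, DirIn n j θ →
        Tendsto (fun r : ℝ => ‖y ((r : ℂ) * Complex.exp (θ * Complex.I))‖) atTop atTop) := by
  obtain ⟨hyd, hode⟩ := hy
  set p : ℝ := (d : ℝ) / 2 with hpdef
  have hp : 0 < p := by
    have : (2 : ℝ) ≤ d := by exact_mod_cast hd
    linarith
  have hp1 : 0 < p + 1 := by linarith
  have hn2 : (n : ℝ) = 2 * (p + 1) := by rw [hn, hpdef]; push_cast; ring
  obtain ⟨K, hK, hPol⟩ := exists_norm_Pol_sub_le d α lam
  obtain ⟨C, M, hC, hM, hgrow⟩ := exists_growth_bound (K := K + 1) hp (by linarith) hyd hode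
    (fun z hz => by
      rw [rpow_half_sq (norm_nonneg z)]
      have h1 : Pol d α z - lam = (Pol d α z - lam - z ^ d) + z ^ d := by ring
      have h2 : ‖z‖ ^ (d - 1) ≤ ‖z‖ ^ d := pow_le_pow_right₀ hz (by omega)
      rw [h1]
      refine (norm_add_le _ _).trans ?_
      rw [norm_pow, add_mul, one_mul]
      gcongr
      exact (hPol z hz).trans (by gcongr))
  set c : ℝ → ℝ := fun θ => Real.cos ((p + 1) * θ - Real.pi * j) / (2 * (p + 1)) with hc
  have hcos : ∀ θ, DirIn n j θ → 0 < Real.cos ((p + 1) * θ - Real.pi * j) := by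
    intro θ hθ
    have h1 : (p + 1) * θ - Real.pi * j = (p + 1) * (θ - 2 * Real.pi * j / n) := by
      rw [hn2]; field_simp
    have h2 : |(p + 1) * θ - Real.pi * j| < Real.pi / 2 := by
      rw [h1, abs_mul, abs_of_pos hp1]
      refine (mul_lt_mul_of_pos_left hθ hp1).trans_eq ?_
      rw [hn2]; field_simp
    exact Real.cos_pos_of_mem_Ioo (abs_lt.1 h2)
  have hdich : ∀ θ, DirIn n j θ →
      Tendsto (fun r : ℝ => ‖y (r * Complex.exp (θ * I))‖) atTop atTop ∨
      ∃ C' : ℝ, ∀ r : ℝ, 0 < r →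
        ‖y (r * Complex.exp (θ * I))‖ ≤ C' * Real.exp (-(c θ * r ^ (p + 1))) := by
    intro θ hθ
    refine (dominant_or_decay_on_ray hd ⟨hyd, hode⟩ j (hcos θ hθ)).imp_right ?_
    rintro ⟨C₁, R, hR⟩
    have hcθ : 0 < c θ := div_pos (hcos θ hθ) (by linarith)
    refine ⟨max C₁ (C * Real.exp ((M + c θ) * R ^ (p + 1))), fun r hr => ?_⟩
    rcases le_total R r with h | h
    · exact (hR r h).trans (mul_le_mul_of_nonneg_right (le_max_left _ _) (Real.exp_pos _).le)
    · have hg := hgrow (r * Complex.exp (θ * I))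
      rw [norm_mul, Complex.norm_exp_ofReal_mul_I, mul_one, Complex.norm_real,
        Real.norm_of_nonneg hr.le] at hg
      refine hg.trans (le_trans ?_
        (mul_le_mul_of_nonneg_right (le_max_right _ _) (Real.exp_pos _).le))
      rw [mul_assoc, ← Real.exp_add]
      have h1 : r ^ (p + 1) ≤ R ^ (p + 1) := Real.rpow_le_rpow hr.le h hp1.le
      refine mul_le_mul_of_nonneg_left (Real.exp_le_exp.2 ?_) hC
      linarith [mul_le_mul_of_nonneg_left h1 (by linarith : 0 ≤ M + c θ)]
  set g : ℝ → ℝ → ℝ := fun θ₀ θ => -c θ₀ * Real.cos ((p + 1) * (θ - θ₀)) +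
    M * |Real.sin ((p + 1) * (θ - θ₀))| with hg
  have hcc : Continuous c := by rw [hc]; fun_prop
  have hgc : Continuous (Function.uncurry g) := by
    simp only [hg, Function.uncurry_def]
    fun_prop
  have hgneg : ∀ θ, DirIn n j θ → g θ θ < 0 := fun θ hθ => by
    have : 0 < c θ := div_pos (hcos θ hθ) (by linarith)
    simpa [hg] using this
  set S : Set ℝ := {θ | DirIn n j θ ∧
    Tendsto (fun r : ℝ => y (r * Complex.exp (θ * I))) atTop (𝓝 0)} with hS
  have hstep : ∀ θ₀ ∈ S, ∀ θ, DirIn n j θ → |θ - θ₀| < Real.pi / (2 * (p + 1)) →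
      g θ₀ θ < 0 → θ ∈ S := by
    rintro θ₀ ⟨hθ₀, hlim⟩ θ hθ hclose hneg
    rcases hdich θ₀ hθ₀ with h | ⟨C', hC'⟩
    · exact absurd hlim.norm (not_tendsto_nhds_of_tendsto_atTop h _)
    · exact ⟨hθ, tendsto_zero_of_decay_on_ray hyd hp hC hM hgrow hC' hclose hneg⟩
  have hδ : 0 < Real.pi / (2 * (p + 1)) := div_pos Real.pi_pos (by linarith)
  have hDir : ∀ θ, DirIn n j θ ↔ θ ∈ Metric.ball (2 * Real.pi * j / n) (Real.pi / n) :=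
    fun θ => by rw [DirIn, Metric.mem_ball, Real.dist_eq]
  have hopen : IsOpen S := by
    rw [isOpen_iff_mem_nhds]
    intro θ₀ hθ₀
    have h1 : ∀ᶠ θ in 𝓝 θ₀, DirIn n j θ := by
      simp only [hDir]
      exact Metric.isOpen_ball.mem_nhds ((hDir θ₀).1 hθ₀.1)
    have h2 : ∀ᶠ θ in 𝓝 θ₀, g θ₀ θ < 0 :=
      (hgc.comp (Continuous.prodMk_right θ₀)).continuousAt.eventually_lt_const (hgneg θ₀ hθ₀.1)
    filter_upwards [h1, h2, Metric.ball_mem_nhds θ₀ hδ] with θ h3 h4 h5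
    exact hstep θ₀ hθ₀ θ h3 (by rwa [Metric.mem_ball, Real.dist_eq] at h5) h4
  have hclosed : closure S ∩ Metric.ball (2 * Real.pi * j / n) (Real.pi / n) ⊆ S := by
    rintro θ ⟨hcl, hθ⟩
    rw [← hDir] at hθ
    have h2 : ∀ᶠ θ₀ in 𝓝 θ, g θ₀ θ < 0 :=
      (hgc.comp (Continuous.prodMk_left θ)).continuousAt.eventually_lt_const (hgneg θ hθ)
    obtain ⟨θ₀, hθ₀, h3, h4⟩ :=
      ((mem_closure_iff_frequently.1 hcl).and_eventually
        (h2.and (Metric.ball_mem_nhds θ hδ))).exists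
    refine hstep θ₀ hθ₀ θ hθ ?_ h3
    rwa [dist_comm, Real.dist_eq] at h4
  by_cases hne : S.Nonempty
  · left
    obtain ⟨θ₀, hθ₀⟩ := hne
    have hconn := (convex_ball (2 * Real.pi * j / n : ℝ) (Real.pi / n)).isPreconnected
    have hsub := hconn.subset_of_closure_inter_subset hopen ⟨θ₀, (hDir θ₀).1 hθ₀.1, hθ₀⟩ hclosed
    exact fun θ hθ => (hsub ((hDir θ).1 hθ)).2
  · right
    intro θ hθ
    refine (hdich θ hθ).resolve_right ?_
    rintro ⟨C', hC'⟩
    exact hne ⟨θ, hθ, tendsto_zero_of_decay_on_ray hyd hp hC hM hgrow hC' (by simpa using hδ)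
      (hgneg θ hθ)⟩
end

section
/- Let d ≥ 2 and n = d + 2. No nonzero solution of the Schrödinger equation with parameters (α, λ) is subdominant in two adjacent Stokes sectors: if y is a nonzero solution and j ∈ {0,…,n−1}, then y is not simultaneously subdominant in S_j and in S_{j+1 mod n}. -/
open Complex Filter Topology

/-- Grönwall's inequality in exponential form. -/
theorem le_mul_exp_of_hasDerivAt_le {E E' : ℝ → ℝ} {K a b : ℝ} (hab : a ≤ b)
    (hE : ∀ t, HasDerivAt E (E' t) t) (h : ∀ t ∈ Set.Icc a b, E' t ≤ K * E t) :
    E b ≤ E a * Real.exp (K * (b - a)) := by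
  have hd : ∀ t, HasDerivAt (fun t => E t * Real.exp (-K * t))
      (E' t * Real.exp (-K * t) + E t * (Real.exp (-K * t) * (-K * 1))) t := fun t =>
    (hE t).mul (((hasDerivAt_id t).const_mul (-K)).exp)
  have hanti : AntitoneOn (fun t => E t * Real.exp (-K * t)) (Set.Icc a b) := by
    refine antitoneOn_of_deriv_nonpos (convex_Icc a b)
      (fun t _ => (hd t).continuousAt.continuousWithinAt)
      (fun t _ => (hd t).differentiableAt.differentiableWithinAt) fun t ht => ?_
    rw [(hd t).deriv]
    nlinarith [h t (interior_subset ht), Real.exp_pos (-K * t)]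
  have hba : E b * Real.exp (-K * b) ≤ E a * Real.exp (-K * a) :=
    hanti (Set.left_mem_Icc.2 hab) (Set.right_mem_Icc.2 hab) hab
  calc E b = E b * Real.exp (-K * b) * Real.exp (K * b) := by
        rw [mul_assoc, ← Real.exp_add]; simp
    _ ≤ E a * Real.exp (-K * a) * Real.exp (K * b) := by gcongr
    _ = E a * Real.exp (K * (b - a)) := by
        rw [mul_assoc, ← Real.exp_add]; ring_nf

/-- A function tending to zero with `v'' ≥ k² v` decays at least as fast as `exp (-k t)`. -/
theorem le_mul_exp_neg_of_tendsto_zero {v v' v'' : ℝ → ℝ} {k R b : ℝ} (hRb : R ≤ b)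
    (hv : ∀ t, HasDerivAt v (v' t) t) (hv' : ∀ t, HasDerivAt v' (v'' t) t)
    (hlim : Tendsto v atTop (𝓝 0)) (h : ∀ t, R ≤ t → k ^ 2 * v t ≤ v'' t) (hk : 0 ≤ k) :
    v b ≤ v R * Real.exp (-k * (b - R)) := by
  refine le_mul_exp_of_hasDerivAt_le hRb hv fun a ⟨ha, _⟩ => ?_
  by_contra! hlt
  set δ := v' a + k * v a with hδ
  have hδ0 : 0 < δ := by linarith
  have hgrow : ∀ t, a ≤ t → δ ≤ v' t + k * v t := by
    intro t hat
    have hderiv : ∀ t, HasDerivAt (fun t => -(v' t + k * v t)) (-(v'' t + k * v' t)) t :=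
      fun t => ((hv' t).add ((hv t).const_mul k)).neg
    have hb := le_mul_exp_of_hasDerivAt_le (K := k) hat hderiv fun s hs => by
      nlinarith [h s (ha.trans hs.1)]
    have h1 : 1 ≤ Real.exp (k * (t - a)) :=
      Real.one_le_exp (mul_nonneg hk (sub_nonneg.2 hat))
    nlinarith
  have hev : ∀ᶠ t in atTop, k * v t < δ / 2 := by
    have : Tendsto (fun t => k * v t) atTop (𝓝 0) := by simpa using hlim.const_mul k
    exact this.eventually_lt_const (by linarith)
  obtain ⟨T, hT⟩ := eventually_atTop.1 hev
  set S := max T a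
  have hlin : ∀ t, S ≤ t → δ / 2 * (t - S) ≤ v t - v S := by
    intro t ht
    refine (convex_Ici S).mul_sub_le_image_sub_of_le_deriv
      (fun t _ => (hv t).continuousAt.continuousWithinAt)
      (fun t _ => (hv t).differentiableAt.differentiableWithinAt) (fun s hs => ?_)
      S Set.self_mem_Ici t ht ht
    rw [interior_Ici] at hs
    have hs' : S < s := hs
    rw [(hv s).deriv]
    have h1 := hT s ((le_max_left T a).trans hs'.le)
    have h2 := hgrow s ((le_max_right T a).trans hs'.le)
    linarith
  have htop : Tendsto (fun t => δ / 2 * (t - S) + v S) atTop atTop :=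
    tendsto_atTop_add_const_right _ _
      ((tendsto_atTop_add_const_right _ (-S) tendsto_id).const_mul_atTop (by linarith))
  refine not_tendsto_nhds_of_tendsto_atTop (tendsto_atTop_mono' _ ?_ htop) 0 hlim
  filter_upwards [eventually_ge_atTop S] with t ht
  linarith [hlin t ht]

/-- Growth estimate for a solution of `g'' = q g` from a bound on `q` in a disc. -/
theorem norm_sq_le_of_deriv_deriv_eq {g q : ℂ → ℂ} (hg : Differentiable ℂ g)
    (hgq : ∀ z, deriv (deriv g) z = q z * g z) {M : ℝ} (hM : 1 ≤ M) {z : ℂ}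
    (hq : ∀ w, ‖w‖ ≤ ‖z‖ → ‖q w‖ ≤ M ^ 2) :
    ‖g z‖ ^ 2 ≤ (‖g 0‖ ^ 2 + ‖deriv g 0‖ ^ 2) * Real.exp (2 * M * ‖z‖) := by
  have hg' : Differentiable ℂ (deriv g) := hg.deriv
  have hline : ∀ t : ℝ, HasDerivAt (fun t : ℝ => (t : ℂ) * z) z t := fun t => by
    simpa using (Complex.ofRealCLM.hasDerivAt (x := t)).mul_const z
  have h1 : ∀ t : ℝ, HasDerivAt (fun t : ℝ => g (t * z)) (deriv g (t * z) * z) t :=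
    fun t => (hg (t * z)).hasDerivAt.comp t (hline t)
  have h2 : ∀ t : ℝ, HasDerivAt (fun t : ℝ => deriv g (t * z)) (q (t * z) * g (t * z) * z) t :=
    fun t => by
      rw [← hgq]
      exact (hg' (t * z)).hasDerivAt.comp t (hline t)
  have h := le_mul_exp_of_hasDerivAt_le (K := 2 * M * ‖z‖) zero_le_one
    (fun t => ((h1 t).norm_sq.const_mul (M ^ 2)).add (h2 t).norm_sq) fun t ht => ?_
  · simp only [Pi.add_apply, ofReal_one, one_mul, ofReal_zero, zero_mul, sub_zero, mul_one] at h
    have hM2 : 1 ≤ M ^ 2 := one_le_pow₀ hM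
    have hle : M ^ 2 * ‖g z‖ ^ 2 ≤
        M ^ 2 * ((‖g 0‖ ^ 2 + ‖deriv g 0‖ ^ 2) * Real.exp (2 * M * ‖z‖)) := by
      calc M ^ 2 * ‖g z‖ ^ 2 ≤ M ^ 2 * ‖g z‖ ^ 2 + ‖deriv g z‖ ^ 2 :=
            le_add_of_nonneg_right (sq_nonneg _)
        _ ≤ (M ^ 2 * ‖g 0‖ ^ 2 + ‖deriv g 0‖ ^ 2) * Real.exp (2 * M * ‖z‖) := h
        _ ≤ (M ^ 2 * ‖g 0‖ ^ 2 + M ^ 2 * ‖deriv g 0‖ ^ 2) * Real.exp (2 * M * ‖z‖) := by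
          gcongr
          exact le_mul_of_one_le_left (sq_nonneg _) hM2
        _ = _ := by ring
    exact le_of_mul_le_mul_left hle (by linarith)
  · have hqt : ‖q (t * z)‖ ≤ M ^ 2 := hq _ (by
      rw [norm_mul, norm_real, Real.norm_of_nonneg ht.1]
      exact mul_le_of_le_one_left (norm_nonneg z) ht.2)
    have i1 := real_inner_le_norm (g (t * z)) (deriv g (t * z) * z)
    have i2 := real_inner_le_norm (deriv g (t * z)) (q (t * z) * g (t * z) * z)
    simp only [norm_mul] at i1 i2
    simp only [Pi.add_apply]
    set A := ‖g (t * z)‖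
    set B := ‖deriv g (t * z)‖
    have i3 : B * (‖q (t * z)‖ * A * ‖z‖) ≤ B * (M ^ 2 * A * ‖z‖) := by
      gcongr
    have i4 : 0 ≤ ‖z‖ * M * (M * A - B) ^ 2 := by positivity
    nlinarith [mul_le_mul_of_nonneg_left i1 (sq_nonneg M)]

theorem norm_sq_le_mul_exp_neg {g q : ℂ → ℂ} (hg : Differentiable ℂ g)
    (hgq : ∀ z, deriv (deriv g) z = q z * g z) {d : ℕ} {R₀ : ℝ} (hR₀ : 0 ≤ R₀)
    (hq : ∀ r : ℝ, R₀ ≤ r → r ^ d / 2 ≤ (q r).re)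
    (hlim : Tendsto (fun r : ℝ => g r) atTop (𝓝 0)) {r : ℝ} (hr : R₀ ≤ r) :
    ‖g (2 * r : ℝ)‖ ^ 2 ≤ ‖g r‖ ^ 2 * Real.exp (-√(r ^ d) * r) := by
  have hg' : Differentiable ℂ (deriv g) := hg.deriv
  have h1 : ∀ t : ℝ, HasDerivAt (fun t : ℝ => g t) (deriv g t) t :=
    fun t => (hg t).hasDerivAt.comp_ofReal
  have h2 : ∀ t : ℝ, HasDerivAt (fun t : ℝ => deriv g t) (q t * g t) t :=
    fun t => hgq t ▸ (hg' t).hasDerivAt.comp_ofReal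
  have h3 : ∀ t : ℝ, HasDerivAt (fun t : ℝ => 2 * inner ℝ (g t) (deriv g t))
      (2 * (inner ℝ (g t) (q t * g t) + inner ℝ (deriv g t) (deriv g t))) t :=
    fun t => ((h1 t).inner ℝ (h2 t)).const_mul 2
  have h := le_mul_exp_neg_of_tendsto_zero (R := r) (b := 2 * r) (k := √(r ^ d)) (by linarith)
    (fun t => (h1 t).norm_sq) h3 (by simpa using (hlim.norm.pow 2)) (fun t ht => ?_)
    (Real.sqrt_nonneg _)
  · convert h using 3; ring
  have hr0 := hR₀.trans hr
  rw [Real.sq_sqrt (pow_nonneg hr0 d)]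
  have h4 : inner ℝ (g t) (q t * g t) = (q t).re * ‖g t‖ ^ 2 := by
    rw [Complex.inner, ← Complex.normSq_eq_norm_sq, Complex.normSq_apply]
    simp; ring
  rw [h4, real_inner_self_eq_norm_sq]
  have h5 : r ^ d ≤ t ^ d := pow_le_pow_left₀ hr0 ht d
  nlinarith [hq t (hr.trans ht), sq_nonneg ‖g t‖, sq_nonneg ‖deriv g t‖]

/-- An entire function of order at most `ν`, bounded on two rays enclosing an angle `aπ` with
`1 < a * ν < 2`, and decaying like `exp (-c r ^ ν)` on the bisecting ray, vanishes. -/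
theorem eq_zero_of_sector {g : ℂ → ℂ} (hg : Differentiable ℂ g) {a ν : ℝ} (ha : 0 < a)
    (h1 : 1 < a * ν) (h2 : a * ν < 2) {B C c R : ℝ} (hc : 0 < c)
    (hgrowth : ∀ z, 1 ≤ ‖z‖ → ‖g z‖ ≤ C * Real.exp (B * ‖z‖ ^ ν))
    (hdecay : ∀ r : ℝ, R ≤ r → ‖g r‖ ≤ C * Real.exp (-(c * r ^ ν)))
    (hpos : ∀ r : ℝ, 0 ≤ r → ‖g (r * exp ((a * (Real.pi / 2) : ℝ) * I))‖ ≤ C)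
    (hneg : ∀ r : ℝ, 0 ≤ r → ‖g (r * exp ((-(a * (Real.pi / 2)) : ℝ) * I))‖ ≤ C) : g = 0 := by
  have hpow : ∀ x : ℝ, 0 ≤ x → ∀ s : ℝ, (x ^ a : ℝ) ^ s = x ^ (a * s) :=
    fun x hx s => (Real.rpow_mul hx a s).symm
  have hreal : ∀ x : ℝ, 0 ≤ x → (x : ℂ) ^ (a : ℂ) = (x ^ a : ℝ) := fun x hx =>
    (ofReal_cpow hx a).symm
  have hzero : Set.EqOn (fun w => g (w ^ (a : ℂ))) 0 {w | 0 ≤ w.re} := by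
    refine PhragmenLindelof.eq_zero_on_right_half_plane_of_superexponential_decay ⟨?_, ?_⟩
      ⟨a * ν, h2, B, ?_⟩ (fun m => ?_) ⟨C, fun x => ?_⟩
    · intro w hw
      exact ((hg _).comp w (differentiableAt_id.cpow_const (Or.inl hw))).differentiableWithinAt
    · rw [closure_setOfPred_lt_re]
      intro w hw
      exact (hg.continuous.continuousAt.comp
        (continuousAt_cpow_const_of_re_pos (Or.inl hw) (by simpa))).continuousWithinAt
    · refine Asymptotics.IsBigO.of_bound C ?_
      have hev : ∀ᶠ w : ℂ in Bornology.cobounded ℂ, 1 ≤ ‖w‖ :=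
        tendsto_norm_cobounded_atTop.eventually_ge_atTop 1
      filter_upwards [hev.filter_mono inf_le_left] with w hw
      have hn : ‖w ^ (a : ℂ)‖ = ‖w‖ ^ a := norm_cpow_real w a
      have := hgrowth (w ^ (a : ℂ)) (by rw [hn]; exact Real.one_le_rpow hw ha.le)
      rwa [hn, hpow _ (norm_nonneg w), ← Real.norm_of_nonneg (Real.exp_nonneg _)] at this
    · have hlim : Tendsto (fun x : ℝ => C * Real.exp (x * (m - c * x ^ (a * ν - 1)))) atTop
          (𝓝 0) := by
        have hbot : Tendsto (fun x : ℝ => m - c * x ^ (a * ν - 1)) atTop atBot :=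
          tendsto_atBot_add_const_left _ _ (tendsto_neg_atTop_atBot.comp
            ((tendsto_rpow_atTop (by linarith)).const_mul_atTop hc))
        simpa using (Real.tendsto_exp_atBot.comp
          (tendsto_id.atTop_mul_atBot₀ hbot)).const_mul C
      refine squeeze_zero' (Eventually.of_forall fun x => by positivity) ?_ hlim
      filter_upwards [eventually_gt_atTop 0,
        (tendsto_rpow_atTop ha).eventually_ge_atTop R] with x hx hxR
      rw [hreal x hx.le]
      calc Real.exp x ^ m * ‖g (x ^ a : ℝ)‖
          ≤ Real.exp x ^ m * (C * Real.exp (-(c * (x ^ a) ^ ν))) := by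
            gcongr
            exact hdecay _ hxR
        _ = C * (Real.exp (m * x) * Real.exp (-(c * (x ^ a) ^ ν))) := by
            rw [Real.exp_nat_mul]; ring
        _ = C * Real.exp (x * (m - c * x ^ (a * ν - 1))) := by
            rw [← Real.exp_add, hpow x hx.le, Real.rpow_sub_one hx.ne']
            congr 2
            field_simp
            ring
    · have harg : ∀ θ : ℝ, θ ∈ Set.Ioc (-Real.pi) Real.pi → ∀ r : ℝ, 0 ≤ r →
          ((r : ℂ) * exp (θ * I)) ^ (a : ℂ) = (r ^ a : ℝ) * exp ((a * θ : ℝ) * I) := by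
        intro θ hθ r hr
        rcases hr.eq_or_lt with rfl | hr
        · simp [ha.ne', Real.zero_rpow]
        · rw [cpow_def_of_ne_zero (mul_ne_zero (ofReal_ne_zero.2 hr.ne') (exp_ne_zero _)),
            log_ofReal_mul hr (exp_ne_zero _), log_exp (by simpa using hθ.1) (by simpa using hθ.2),
            Real.rpow_def_of_pos hr, ofReal_exp, ← exp_add]
          congr 1
          push_cast
          ring
      have hπ := Real.pi_pos
      rcases le_total 0 x with hx | hx
      · have hxI : (x : ℂ) * I = x * exp ((Real.pi / 2 : ℝ) * I) := by
          rw [ofReal_div, ofReal_ofNat, exp_pi_div_two_mul_I]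
        rw [hxI, harg _ ⟨by linarith, by linarith⟩ x hx]
        exact hpos _ (Real.rpow_nonneg hx a)
      · have hxI : (x : ℂ) * I = (-x : ℝ) * exp ((-(Real.pi / 2) : ℝ) * I) := by
          rw [ofReal_neg (Real.pi / 2), ofReal_div, ofReal_ofNat, ← neg_div,
            exp_neg_pi_div_two_mul_I]
          simp
        rw [hxI, harg _ ⟨by linarith, by linarith⟩ (-x) (neg_nonneg.2 hx), mul_neg]
        exact hneg _ (Real.rpow_nonneg (neg_nonneg.2 hx) a)
  have han : AnalyticOnNhd ℂ g Set.univ := hg.differentiableOn.analyticOnNhd isOpen_univ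
  refine han.eq_of_frequently_eq (z₀ := 1) (fun _ _ => analyticAt_const) ?_
  have ht : Tendsto (fun x : ℝ => (x : ℂ)) (𝓝[>] 1) (𝓝[≠] 1) := by
    refine tendsto_nhdsWithin_iff.2 ⟨?_, ?_⟩
    · exact (continuous_ofReal.tendsto' 1 1 ofReal_one).mono_left nhdsWithin_le_nhds
    · filter_upwards [self_mem_nhdsWithin] with x (hx : 1 < x)
      simpa using hx.ne'
  refine ht.frequently (Eventually.frequently ?_)
  filter_upwards [self_mem_nhdsWithin] with x (hx : 1 < x)
  have hx0 : (0 : ℝ) ≤ x := by linarith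
  have := hzero (x := ((x ^ a⁻¹ : ℝ) : ℂ)) (by simpa using Real.rpow_nonneg hx0 _)
  simpa [hreal _ (Real.rpow_nonneg hx0 a⁻¹), Real.rpow_inv_rpow hx0 ha.ne'] using this

theorem exists_norm_le_of_tendsto_zero {u : ℝ → ℂ} (hu : Continuous u)
    (hlim : Tendsto u atTop (𝓝 0)) : ∃ C, ∀ r, 0 ≤ r → ‖u r‖ ≤ C := by
  obtain ⟨T, hT⟩ := eventually_atTop.1 (hlim.norm.eventually_le_const (u := 1) (by simp))
  obtain ⟨C, hC⟩ := (isCompact_Icc (a := 0) (b := T)).exists_bound_of_continuousOn hu.continuousOn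
  refine ⟨max C 1, fun r hr => ?_⟩
  rcases le_total r T with h | h
  · exact (hC r ⟨hr, h⟩).trans (le_max_left _ _)
  · exact (hT r h).trans (le_max_right _ _)

theorem sqrt_pow_mul_self {x : ℝ} (hx : 0 ≤ x) (d : ℕ) :
    √(x ^ d) * x = x ^ ((d : ℝ) / 2 + 1) := by
  rw [Real.rpow_add_one' hx (by positivity), Real.sqrt_eq_rpow, ← Real.rpow_natCast_mul hx]
  ring_nf

theorem exists_norm_le_exp {g q : ℂ → ℂ} (hg : Differentiable ℂ g)
    (hgq : ∀ z, deriv (deriv g) z = q z * g z) {d : ℕ} {K : ℝ} (hK : 1 ≤ K)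
    (hq : ∀ z, ‖q z‖ ≤ K * (1 + ‖z‖) ^ d) :
    ∃ C B : ℝ, ∀ z, 1 ≤ ‖z‖ → ‖g z‖ ≤ C * Real.exp (B * ‖z‖ ^ ((d : ℝ) / 2 + 1)) := by
  refine ⟨√(‖g 0‖ ^ 2 + ‖deriv g 0‖ ^ 2), √(K * 2 ^ d), fun z hz => ?_⟩
  have hK0 : 0 ≤ K * 2 ^ d := by positivity
  have h := norm_sq_le_of_deriv_deriv_eq hg hgq (z := z) (M := √(K * 2 ^ d) * √(‖z‖ ^ d)) ?_ ?_
  · refine (pow_le_pow_iff_left₀ (norm_nonneg _) (by positivity) two_ne_zero).1 ?_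
    rw [mul_pow, Real.sq_sqrt (by positivity), ← Real.exp_nat_mul,
      ← sqrt_pow_mul_self (by positivity)]
    refine h.trans_eq ?_
    congr 2
    push_cast
    ring
  · rw [← Real.sqrt_mul hK0, Real.one_le_sqrt]
    have h1 : (1 : ℝ) ≤ 2 ^ d := one_le_pow₀ (by norm_num)
    exact one_le_mul_of_one_le_of_one_le (one_le_mul_of_one_le_of_one_le hK h1) (one_le_pow₀ hz)
  · intro w hw
    rw [mul_pow, Real.sq_sqrt hK0, Real.sq_sqrt (by positivity), mul_assoc, ← mul_pow]
    refine (hq w).trans ?_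
    gcongr
    linarith

theorem exists_norm_le_exp_neg {g q : ℂ → ℂ} (hg : Differentiable ℂ g)
    (hgq : ∀ z, deriv (deriv g) z = q z * g z) {d : ℕ}
    (hq : ∀ᶠ r : ℝ in atTop, r ^ d / 2 ≤ (q r).re)
    (hlim : Tendsto (fun r : ℝ => g r) atTop (𝓝 0)) :
    ∃ C c R : ℝ, 0 < c ∧
      ∀ r : ℝ, R ≤ r → ‖g r‖ ≤ C * Real.exp (-(c * r ^ ((d : ℝ) / 2 + 1))) := by
  obtain ⟨C, hC⟩ := exists_norm_le_of_tendsto_zero (hg.continuous.comp continuous_ofReal) hlim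
  obtain ⟨R, hR⟩ := eventually_atTop.1 hq
  have hC0 : 0 ≤ C := (norm_nonneg _).trans (hC 0 le_rfl)
  refine ⟨C, (1 / 2) ^ ((d : ℝ) / 2 + 1) / 2, 2 * max R 0, by positivity, fun r hr => ?_⟩
  have hr' : max R 0 ≤ r / 2 := by linarith
  have hr0 : 0 ≤ r / 2 := (le_max_right R 0).trans hr'
  have h := norm_sq_le_mul_exp_neg hg hgq (le_max_right R 0)
    (fun s hs => hR s ((le_max_left R 0).trans hs)) hlim hr'
  rw [neg_mul, sqrt_pow_mul_self hr0, mul_div_cancel₀ r two_ne_zero] at h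
  refine (pow_le_pow_iff_left₀ (norm_nonneg _) (by positivity) two_ne_zero).1 (h.trans ?_)
  rw [mul_pow, ← Real.exp_nat_mul]
  have hpow : (r / 2) ^ ((d : ℝ) / 2 + 1) =
      (1 / 2) ^ ((d : ℝ) / 2 + 1) * r ^ ((d : ℝ) / 2 + 1) := by
    rw [← Real.mul_rpow (by norm_num) (by linarith)]
    ring_nf
  rw [hpow]
  refine mul_le_mul (pow_le_pow_left₀ (norm_nonneg _) (hC _ hr0) 2) (le_of_eq ?_)
    (Real.exp_nonneg _) (by positivity)
  push_cast
  ring_nf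

theorem exists_norm_pol_sub_le (d : ℕ) (α : Fin (d - 1) → ℂ) (lam : ℂ) :
    ∃ K : ℝ, 0 ≤ K ∧ ∀ z, ‖Pol d α z - lam - z ^ d‖ ≤ K * (1 + ‖z‖) ^ (d - 1) := by
  refine ⟨∑ i, ‖α i‖ + ‖lam‖, by positivity, fun z => ?_⟩
  have h1 : 1 ≤ 1 + ‖z‖ := by simp
  calc ‖Pol d α z - lam - z ^ d‖ = ‖(∑ i, α i * z ^ ((i : ℕ) + 1)) - lam‖ := by
        rw [Pol]; ring_nf
    _ ≤ ∑ i, ‖α i‖ * (1 + ‖z‖) ^ (d - 1) + ‖lam‖ * (1 + ‖z‖) ^ (d - 1) := by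
        refine (norm_sub_le _ _).trans (add_le_add (norm_sum_le_of_le _ fun i _ => ?_)
          (le_mul_of_one_le_right (norm_nonneg _) (one_le_pow₀ h1)))
        rw [norm_mul, norm_pow]
        gcongr
        calc ‖z‖ ^ ((i : ℕ) + 1) ≤ (1 + ‖z‖) ^ ((i : ℕ) + 1) := by gcongr; linarith
          _ ≤ (1 + ‖z‖) ^ (d - 1) := pow_le_pow_right₀ h1 i.isLt
    _ = _ := by rw [← Finset.sum_mul]; ring

/-- On a ray whose direction `e` has `e ^ (d + 2) = exp (i π / 4)` the real part of the rotated
potential eventually dominates `r ^ d / 2`. -/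
theorem eventually_le_re_pol {d : ℕ} (hd : 1 ≤ d) (α : Fin (d - 1) → ℂ) (lam : ℂ) {e : ℂ}
    (he : ‖e‖ = 1) (hed : e ^ (d + 2) = exp ((Real.pi / 4 : ℝ) * I)) :
    ∀ᶠ r : ℝ in atTop, r ^ d / 2 ≤ (e ^ 2 * (Pol d α (e * r) - lam)).re := by
  obtain ⟨K, hK0, hK⟩ := exists_norm_pol_sub_le d α lam
  filter_upwards [eventually_ge_atTop (1 : ℝ),
    eventually_ge_atTop (10 * (K * 2 ^ (d - 1)))] with r hr1 hrK
  have hr0 : 0 ≤ r := by linarith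
  set E := Pol d α (e * r) - lam - (e * r) ^ d with hE
  have hEle : ‖E‖ ≤ r ^ d / 10 := by
    have hnorm : ‖e * r‖ = r := by rw [norm_mul, he, norm_real, Real.norm_of_nonneg hr0, one_mul]
    calc ‖E‖ ≤ K * (1 + r) ^ (d - 1) := by simpa only [hnorm] using hK (e * r)
      _ ≤ K * (2 * r) ^ (d - 1) := by gcongr; linarith
      _ = K * 2 ^ (d - 1) * r ^ (d - 1) := by rw [mul_pow]; ring
      _ ≤ r / 10 * r ^ (d - 1) := by gcongr; linarith
      _ = r ^ d / 10 := by rw [div_mul_eq_mul_div, mul_pow_sub_one (by omega)]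
  have hsplit : e ^ 2 * (Pol d α (e * r) - lam) =
      (r ^ d : ℝ) * exp ((Real.pi / 4 : ℝ) * I) + e ^ 2 * E := by
    rw [← hed, hE]
    push_cast
    ring
  have hre : |(e ^ 2 * E).re| ≤ r ^ d / 10 :=
    (abs_re_le_norm _).trans (by rwa [norm_mul, norm_pow, he, one_pow, one_mul])
  rw [hsplit, add_re, re_ofReal_mul, exp_ofReal_mul_I_re, Real.cos_pi_div_four]
  have hsqrt : (1.2 : ℝ) ≤ √2 := Real.le_sqrt_of_sq_le (by norm_num)
  nlinarith [neg_le_of_abs_le hre, pow_nonneg hr0 d]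

theorem deriv_deriv_comp_const_mul (y : ℂ → ℂ) (e s : ℂ) :
    deriv (deriv fun s => y (e * s)) s = e ^ 2 * deriv (deriv y) (e * s) := by
  have h1 : (deriv fun s => y (e * s)) = fun s => e * deriv y (e * s) := by
    funext s
    exact deriv_comp_mul_left e y s
  rw [h1, deriv_const_mul_field, deriv_comp_mul_left, smul_eq_mul]
  ring

theorem stmt11 (d : ℕ) (hd : 2 ≤ d) (n : ℕ) (hn : n = d + 2)
    (α : Fin (d - 1) → ℂ) (lam : ℂ) (y : ℂ → ℂ)
    (hy : IsSol d α lam y) (hy0 : y ≠ 0) (j : ℕ) (hj : j < n) :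
    ¬ (Subdominant n j y ∧ Subdominant n ((j + 1) % n) y) := by
  rintro ⟨hS, hS'⟩
  obtain ⟨hdiff, hode⟩ := hy
  have hn0 : (0 : ℝ) < n := by rw [hn]; positivity
  have hπ := Real.pi_pos
  have hnC : (n : ℂ) ≠ 0 := by exact_mod_cast hn0.ne'
  have hε : 0 < Real.pi / n := by positivity
  set θ : ℝ := 2 * Real.pi * j / n + Real.pi / n / 4 with hθ
  set e : ℂ := exp (θ * I) with he
  have he1 : ‖e‖ = 1 := norm_exp_ofReal_mul_I θ
  have hed : e ^ (d + 2) = exp ((Real.pi / 4 : ℝ) * I) := by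
    rw [← hn, he, ← exp_nat_mul, exp_eq_exp_iff_exists_int]
    refine ⟨j, ?_⟩
    rw [hθ]
    push_cast
    field_simp
    ring
  set g : ℂ → ℂ := fun s => y (e * s) with hgdef
  have hg : Differentiable ℂ g := hdiff.comp (differentiable_id.const_mul e)
  have hgq : ∀ z, deriv (deriv g) z = e ^ 2 * (Pol d α (e * z) - lam) * g z := fun z => by
    rw [deriv_deriv_comp_const_mul, hode, mul_assoc]
  have hray : ∀ φ : ℝ, (fun r : ℝ => g (r * exp (φ * I))) =
      fun r : ℝ => y (r * exp ((θ + φ : ℝ) * I)) := fun φ => by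
    funext r
    rw [hgdef, he]
    push_cast
    rw [add_mul, exp_add]
    ring_nf
  have hlim : Tendsto (fun r : ℝ => g r) atTop (𝓝 0) := by
    have h0 : DirIn n j θ := by
      rw [DirIn, hθ, add_sub_cancel_left, abs_lt]
      constructor <;> linarith
    simpa [hgdef, he, mul_comm] using hS θ h0
  set a : ℝ := 9 / 4 / n with ha
  have haπ : a * (Real.pi / 2) = 9 / 8 * (Real.pi / n) := by rw [ha]; ring
  have hlimneg : Tendsto (fun r : ℝ => g (r * exp ((-(a * (Real.pi / 2)) : ℝ) * I))) atTop
      (𝓝 0) := by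
    rw [hray]
    refine hS _ ?_
    rw [DirIn, hθ, haπ, abs_lt]
    constructor <;> linarith
  have hlimpos : Tendsto (fun r : ℝ => g (r * exp ((a * (Real.pi / 2) : ℝ) * I))) atTop
      (𝓝 0) := by
    rw [hray]
    set m := (j + 1) % n with hm
    have hdir : DirIn n m (2 * Real.pi * m / n - 5 / 8 * (Real.pi / n)) := by
      rw [DirIn, abs_lt]
      constructor <;> linarith
    have hexp : exp ((θ + a * (Real.pi / 2) : ℝ) * I) =
        exp ((2 * Real.pi * m / n - 5 / 8 * (Real.pi / n) : ℝ) * I) := by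
      rw [exp_eq_exp_iff_exists_int]
      refine ⟨((j + 1) / n : ℕ), ?_⟩
      have hdm : ((n : ℂ) * ((j + 1) / n : ℕ) + m : ℂ) = j + 1 := by
        exact_mod_cast Nat.div_add_mod (j + 1) n
      generalize (j + 1) / n = k at hdm ⊢
      rw [haπ, hθ]
      push_cast
      rw [eq_sub_of_add_eq' hdm]
      field_simp
      ring
    rw [hexp]
    exact hS' _ hdir
  obtain ⟨K, hK0, hK⟩ := exists_norm_pol_sub_le d α lam
  have hq : ∀ z, ‖e ^ 2 * (Pol d α (e * z) - lam)‖ ≤ (1 + K) * (1 + ‖z‖) ^ d := fun z => by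
    have hez : ‖e * z‖ = ‖z‖ := by rw [norm_mul, he1, one_mul]
    have hz1 : 1 ≤ 1 + ‖z‖ := by simp
    have h := hK (e * z)
    rw [hez] at h
    rw [norm_mul, norm_pow, he1, one_pow, one_mul]
    calc ‖Pol d α (e * z) - lam‖ = ‖(e * z) ^ d + (Pol d α (e * z) - lam - (e * z) ^ d)‖ := by
          congr 1; ring
      _ ≤ ‖z‖ ^ d + K * (1 + ‖z‖) ^ (d - 1) :=
          (norm_add_le _ _).trans (add_le_add (by rw [norm_pow, hez]) h)
      _ ≤ (1 + ‖z‖) ^ d + K * (1 + ‖z‖) ^ d := by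
          gcongr
          · linarith
          · omega
      _ = (1 + K) * (1 + ‖z‖) ^ d := by ring
  obtain ⟨C₁, B, hgrowth⟩ := exists_norm_le_exp hg hgq (by linarith) hq
  obtain ⟨C₂, c, R, hc, hdecay⟩ := exists_norm_le_exp_neg hg hgq
    (eventually_le_re_pol (by omega) α lam he1 hed) hlim
  have hcont : ∀ w : ℂ, Continuous fun r : ℝ => g (r * w) := fun w =>
    hg.continuous.comp (continuous_ofReal.mul continuous_const)
  obtain ⟨C₃, hpos⟩ := exists_norm_le_of_tendsto_zero (hcont _) hlimpos
  obtain ⟨C₄, hneg⟩ := exists_norm_le_of_tendsto_zero (hcont _) hlimneg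
  set C := max (max C₁ C₂) (max C₃ C₄)
  have hν : a * ((d : ℝ) / 2 + 1) = 9 / 8 := by
    rw [ha, hn]
    push_cast
    field_simp
    norm_num
  have hzero : g = 0 := eq_zero_of_sector hg (a := a) (C := C) (by positivity)
    (by rw [hν]; norm_num) (by rw [hν]; norm_num) hc
    (fun z hz => (hgrowth z hz).trans (by gcongr; simp [C]))
    (fun r hr => (hdecay r hr).trans (by gcongr; simp [C]))
    (fun r hr => (hpos r hr).trans (by simp [C])) (fun r hr => (hneg r hr).trans (by simp [C]))
  refine hy0 (funext fun z => ?_)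
  have hez : e * (z / e) = z := mul_div_cancel₀ z (exp_ne_zero _)
  simpa only [hgdef, hez, Pi.zero_apply] using congrFun hzero (z / e)
end
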